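/- arXiv:1109.5250 — 2 statements merged into one kernel-verified Lean document; each statement's English description precedes it below -/
import Mathlib

section
/- Let s > 1, q ∈ [1,∞), let ω be an s-admissible weight on ℝ^d, let A be an invertible d×d real matrix, 0 < c < 2π, Λ₂ = c·(Aᵀ)^{−1}(ℤ^d), and D₁ = x₁ + A([0,1]^d) for some x₁ ∈ ℝ^d. Let f ∈ L¹(ℝ^d) whose support is a compact subset of the interior of D₁, and let Γ₀ ⊂⊂ Γ be open cones in ℝ^d ∖ {0}. If Σ_{λ ∈ Λ₂ ∩ Γ} (|f̂(λ)|·ω(λ))^q < ∞, then ∫_{Γ₀} (|f̂(ξ)|·ω(ξ))^q dξ < ∞. -/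
open MeasureTheory Complex Set
open scoped ENNReal RealInnerProductSpace NNReal

noncomputable section

namespace Paper

variable {d : ℕ}

/-- The Fourier transform, normalized by `(2π)^{-d/2}`. -/
def FT (f : EuclideanSpace ℝ (Fin d) → ℂ) (ξ : EuclideanSpace ℝ (Fin d)) : ℂ :=
  ((2 * Real.pi) ^ (-(d : ℝ) / 2) : ℝ) *
    ∫ x, f x * Complex.exp (-(⟪x, ξ⟫ : ℝ) * Complex.I)

/-- The short-time Fourier transform `V_φ f (x, ξ)`. -/
def STFT (φ f : EuclideanSpace ℝ (Fin d) → ℂ) (x ξ : EuclideanSpace ℝ (Fin d)) : ℂ :=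
  ((2 * Real.pi) ^ (-(d : ℝ) / 2) : ℝ) *
    ∫ y, f y * (starRingEnd ℂ) (φ (y - x)) * Complex.exp (-(⟪ξ, y⟫ : ℝ) * Complex.I)

/-- A cone in `ℝ^d ∖ {0}`. -/
def IsCone (Γ : Set (EuclideanSpace ℝ (Fin d))) : Prop :=
  (0 : EuclideanSpace ℝ (Fin d)) ∉ Γ ∧ ∀ ξ ∈ Γ, ∀ t : ℝ, 0 < t → t • ξ ∈ Γ

/-- An `s`-cutoff: smooth, compactly supported, with Fourier transform decaying faster
than every `exp (-N |ξ|^{1/s})`. -/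
def IsSCutoff (s : ℝ) (φ : EuclideanSpace ℝ (Fin d) → ℂ) : Prop :=
  ContDiff ℝ (⊤ : ℕ∞) φ ∧ HasCompactSupport φ ∧
    ∀ N : ℝ, 0 < N → ∃ C : ℝ, 0 < C ∧
      ∀ ξ, ‖FT φ ξ‖ ≤ C * Real.exp (-N * ‖ξ‖ ^ (1 / s))

/-- An `s`-admissible weight: positive, measurable, and moderate with respect to an even
submultiplicative weight of sub-exponential growth of order `1/s`. -/
def IsSAdmissible (s : ℝ) (ω : EuclideanSpace ℝ (Fin d) → ℝ) : Prop :=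
  Measurable ω ∧ (∀ x, 0 < ω x) ∧
    ∃ v : EuclideanSpace ℝ (Fin d) → ℝ, Measurable v ∧ (∀ x, 0 < v x) ∧
      (∀ x, v (-x) = v x) ∧ (∀ x y, v (x + y) ≤ v x * v y) ∧
      ∃ C₀ k₀ C₁ : ℝ, 0 < C₀ ∧ 0 < k₀ ∧ 0 < C₁ ∧
        (∀ ξ, v ξ ≤ C₀ * Real.exp (k₀ * ‖ξ‖ ^ (1 / s))) ∧
        ∀ x y, ω (x + y) ≤ C₁ * v x * ω y

/-- The Fourier–Lebesgue seminorm `( ∫_Γ (|f̂| ω)^q )^{1/q}` (ess-sup when `q = ∞`). -/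
def FLSemi (ω : EuclideanSpace ℝ (Fin d) → ℝ) (q : ℝ≥0∞)
    (f : EuclideanSpace ℝ (Fin d) → ℂ) (Γ : Set (EuclideanSpace ℝ (Fin d))) : ℝ≥0∞ :=
  eLpNorm (fun ξ => ‖FT f ξ‖ * ω ξ) q (volume.restrict Γ)

/-- The Fourier–Lebesgue wave-front set `WF_{FL^q_ω} f`. -/
def WF_FL (s : ℝ) (q : ℝ≥0∞) (ω : EuclideanSpace ℝ (Fin d) → ℝ)
    (f : EuclideanSpace ℝ (Fin d) → ℂ) :
    Set (EuclideanSpace ℝ (Fin d) × EuclideanSpace ℝ (Fin d)) :=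
  {z | z.2 ≠ 0 ∧ ∀ φ : EuclideanSpace ℝ (Fin d) → ℂ, IsSCutoff s φ → φ z.1 ≠ 0 →
    ∀ Γ : Set (EuclideanSpace ℝ (Fin d)), IsOpen Γ → IsCone Γ → z.2 ∈ Γ →
      FLSemi ω q (fun x => φ x * f x) Γ = ∞}

/-- The `s`-wave-front set `WF_s f`. -/
def WFs (s : ℝ) (f : EuclideanSpace ℝ (Fin d) → ℂ) :
    Set (EuclideanSpace ℝ (Fin d) × EuclideanSpace ℝ (Fin d)) :=
  {z | z.2 ≠ 0 ∧ ¬ ∃ φ : EuclideanSpace ℝ (Fin d) → ℂ, IsSCutoff s φ ∧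
    (∃ U : Set (EuclideanSpace ℝ (Fin d)), IsOpen U ∧ z.1 ∈ U ∧ ∀ x ∈ U, φ x = 1) ∧
    ∃ Γ : Set (EuclideanSpace ℝ (Fin d)), IsOpen Γ ∧ IsCone Γ ∧ z.2 ∈ Γ ∧
      ∃ C k : ℝ, 0 < C ∧ 0 < k ∧
        ∀ ξ ∈ Γ, ‖FT (fun x => φ x * f x) ξ‖ ≤ C * Real.exp (-k * ‖ξ‖ ^ (1 / s))}

/-- The mixed modulation-space seminorm
`( ∫_Γ ( ∫ |V_g F(x,ξ)|^p dx )^{q/p} ω(ξ)^q dξ )^{1/q}` with the usual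
ess-sup interpretations for `p = ∞` or `q = ∞`. -/
def ModSemi (g F : EuclideanSpace ℝ (Fin d) → ℂ) (ω : EuclideanSpace ℝ (Fin d) → ℝ)
    (p q : ℝ≥0∞) (Γ : Set (EuclideanSpace ℝ (Fin d))) : ℝ≥0∞ :=
  if q = ∞ then
    essSup (fun ξ => eLpNorm (fun x => STFT g F x ξ) p volume * ENNReal.ofReal (ω ξ))
      (volume.restrict Γ)
  else
    (∫⁻ ξ in Γ, (eLpNorm (fun x => STFT g F x ξ) p volume * ENNReal.ofReal (ω ξ)) ^ q.toReal) ^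
      (1 / q.toReal)

/-- The modulation wave-front set `WF_{M^{p,q}_ω} f`, with window `g`. -/
def WF_M (s : ℝ) (p q : ℝ≥0∞) (ω : EuclideanSpace ℝ (Fin d) → ℝ)
    (g f : EuclideanSpace ℝ (Fin d) → ℂ) :
    Set (EuclideanSpace ℝ (Fin d) × EuclideanSpace ℝ (Fin d)) :=
  {z | z.2 ≠ 0 ∧ ∀ φ : EuclideanSpace ℝ (Fin d) → ℂ, IsSCutoff s φ → φ z.1 ≠ 0 →
    ∀ Γ : Set (EuclideanSpace ℝ (Fin d)), IsOpen Γ → IsCone Γ → z.2 ∈ Γ →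
      ModSemi g (fun x => φ x * f x) ω p q Γ = ∞}

/-- Reinterpret a plain vector as a point of Euclidean space. -/
def toE (x : Fin d → ℝ) : EuclideanSpace ℝ (Fin d) :=
  (EuclideanSpace.equiv (Fin d) ℝ).symm x

/-- The point `A k` of the lattice `A(ℤ^d)`. -/
def latPt (A : Matrix (Fin d) (Fin d) ℝ) (k : Fin d → ℤ) : EuclideanSpace ℝ (Fin d) :=
  toE (A.mulVec fun i => (k i : ℝ))

/-- The point `c (Aᵀ)⁻¹ k` of the dual lattice `c (Aᵀ)⁻¹(ℤ^d)`. -/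
def dualLatPt (A : Matrix (Fin d) (Fin d) ℝ) (c : ℝ) (k : Fin d → ℤ) :
    EuclideanSpace ℝ (Fin d) :=
  toE (c • (A.transpose⁻¹.mulVec fun i => (k i : ℝ)))

/-- The parallelepiped `x₁ + A([0,1]^d)`. -/
def lattPara (A : Matrix (Fin d) (Fin d) ℝ) (x₁ : EuclideanSpace ℝ (Fin d)) :
    Set (EuclideanSpace ℝ (Fin d)) :=
  (fun t : Fin d → ℝ => x₁ + toE (A.mulVec t)) '' (Set.univ.pi fun _ => Set.Icc 0 1)

/-- The adjoint short-time Fourier transform `V*_φ F`. -/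
def VStar (φ : EuclideanSpace ℝ (Fin d) → ℂ)
    (F : EuclideanSpace ℝ (Fin d) × EuclideanSpace ℝ (Fin d) → ℂ)
    (t : EuclideanSpace ℝ (Fin d)) : ℂ :=
  ((2 * Real.pi) ^ (-(d : ℝ) / 2) : ℝ) *
    ∫ z : EuclideanSpace ℝ (Fin d) × EuclideanSpace ℝ (Fin d),
      F z * Complex.exp ((⟪z.2, t⟫ : ℝ) * Complex.I) * φ (t - z.1)


lemma summable_inv_one_add_sq_shift (τ : ℝ) :
    Summable (fun n : ℤ => 1 / (1 + (τ - n) ^ 2)) := by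
  have h1 : Summable (fun n : ℤ => 2 * (1 + τ ^ 2) * (1 / (n : ℝ) ^ 2)) :=
    (Real.summable_one_div_int_pow.mpr one_lt_two).mul_left _
  refine Summable.of_norm_bounded_eventually h1 ?_
  rw [Filter.eventually_cofinite]
  refine (Set.finite_singleton (0 : ℤ)).subset ?_
  intro n hn
  by_contra h0
  apply hn
  have hn0 : (n : ℝ) ≠ 0 := by exact_mod_cast h0
  have hpos : (0 : ℝ) < (n : ℝ) ^ 2 := by positivity
  rw [Real.norm_of_nonneg (by positivity), mul_one_div, div_le_div_iff₀ (by positivity) hpos]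
  nlinarith [sq_nonneg (n - 2 * τ), sq_nonneg (τ * (τ - n)), sq_nonneg (τ - n)]

lemma base_kernel (b : ℝ) (hb0 : 0 < b) (hb : b < 1) :
    ∃ ε : ℝ, 0 < ε ∧ ∃ K : ℝ → ℂ, ∃ C : ℝ, 0 < C ∧ (∀ τ, ‖K τ‖ ≤ C * (1 / (1 + τ ^ 2))) ∧
      ∀ τ, ∀ y ∈ Icc (-ε) (b + ε),
        HasSum (fun n : ℤ => K (τ - n) * cexp (-(2 * Real.pi * n * y : ℝ) * I))
          (cexp (-(2 * Real.pi * τ * y : ℝ) * I)) := by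
  set ε := (1 - b) / 3 with hε
  have hε0 : 0 < ε := by rw [hε]; linarith
  let B : ContDiffBump (b / 2 : ℝ) := ⟨b / 2 + ε, b / 2 + 2 * ε, by positivity, by linarith⟩
  let ψ : ℝ → ℂ := fun x => (B x : ℂ)
  have hψc : HasCompactSupport ψ := B.hasCompactSupport.comp_left (g := fun r : ℝ => (r : ℂ)) (by simp)
  have hψs : ContDiff ℝ (⊤ : ℕ∞) ψ := Complex.ofRealCLM.contDiff.comp B.contDiff
  let Ψ := hψc.toSchwartzMap hψs
  have hdec : ∃ C : ℝ, 0 < C ∧ ∀ τ, ‖(FourierTransform.fourier Ψ) τ‖ ≤ C * (1 / (1 + τ ^ 2)) := by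
    obtain ⟨C0, hC0, h0⟩ := (FourierTransform.fourier Ψ).decay 0 0
    obtain ⟨C2, hC2, h2⟩ := (FourierTransform.fourier Ψ).decay 2 0
    refine ⟨C0 + C2, by positivity, fun τ => ?_⟩
    have a := h0 τ
    have c := h2 τ
    simp only [norm_iteratedFDeriv_zero, pow_zero, one_mul, Real.norm_eq_abs, sq_abs] at a c
    rw [mul_one_div, le_div_iff₀ (by positivity)]
    linarith
  obtain ⟨C, hC, hK⟩ := hdec
  refine ⟨ε, hε0, fun τ => (FourierTransform.fourier Ψ) τ, C, hC, hK, ?_⟩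
  intro τ y hy
  have hsum : Summable (fun n : ℤ => (FourierTransform.fourier Ψ) (τ - n) *
      cexp (-(2 * Real.pi * n * y : ℝ) * I)) := by
    refine Summable.of_norm_bounded ((summable_inv_one_add_sq_shift τ).mul_left C) ?_
    intro n
    rw [norm_mul, ← Complex.ofReal_neg, Complex.norm_exp_ofReal_mul_I, mul_one]
    exact hK _
  convert hsum.hasSum using 1
  let g : ℝ → ℂ := fun x => ψ x * cexp (-(2 * Real.pi * τ * x : ℝ) * I)
  have hgc : HasCompactSupport g := hψc.mul_right
  have hgs : ContDiff ℝ (⊤ : ℕ∞) g := by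
    refine hψs.mul ?_
    refine Complex.contDiff_exp.comp ?_
    refine ContDiff.mul ?_ contDiff_const
    refine ContDiff.neg ?_
    exact Complex.ofRealCLM.contDiff.comp (contDiff_const.mul contDiff_id)
  let Gs := hgc.toSchwartzMap hgs
  have hP := SchwartzMap.tsum_eq_tsum_fourier Gs y
  have hval : ∀ n : ℤ, (FourierTransform.fourier Gs) n = (FourierTransform.fourier Ψ) (τ + n) := by
    intro n
    rw [SchwartzMap.fourier_coe, SchwartzMap.fourier_coe, Real.fourier_real_eq_integral_exp_smul,
      Real.fourier_real_eq_integral_exp_smul]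
    congr 1
    ext x
    change _ • (ψ x * _) = _ • ψ x
    rw [smul_eq_mul, smul_eq_mul, mul_comm (ψ x), ← mul_assoc, ← Complex.exp_add]
    congr 2
    push_cast
    ring
  have hL : ∑' n : ℤ, Gs (y + n) = cexp (-(2 * Real.pi * τ * y : ℝ) * I) := by
    rw [tsum_eq_single 0]
    · change ψ _ * _ = _
      have : ψ y = 1 := by
        have : B y = 1 := B.one_of_mem_closedBall (by
          rw [Metric.mem_closedBall, Real.dist_eq, abs_le]
          change _ ≤ _ ∧ _ ≤ b / 2 + ε
          constructor
          · change -(b / 2 + ε) ≤ _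
            linarith [hy.1]
          · linarith [hy.2])
        simp [ψ, this]
      simp [this]
    · intro n hn
      change ψ _ * _ = _
      have : ψ (y + n) = 0 := by
        have : B (y + n) = 0 := B.zero_of_le_dist (by
          rw [Real.dist_eq, le_abs]
          change b / 2 + 2 * ε ≤ _ ∨ b / 2 + 2 * ε ≤ _
          rcases lt_or_gt_of_ne hn with h | h
          · right
            have : (n : ℝ) ≤ -1 := by exact_mod_cast Int.le_sub_one_of_lt h
            linarith [hy.2]
          · left
            have : (1 : ℝ) ≤ n := by exact_mod_cast h
            linarith [hy.1])
        simp [ψ, this]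
      rw [this, zero_mul]
  rw [← hL, hP, ← (Equiv.neg ℤ).tsum_eq]
  congr 1
  ext n
  rw [hval, fourier_coe_apply]
  simp only [Equiv.neg_apply, Int.cast_neg, ← sub_eq_add_neg]
  congr 2
  push_cast
  ring

lemma hasSum_of_eq {ι : Type*} {f g : ι → ℂ} {a b : ℂ} (h : HasSum f a) (hf : ∀ n, g n = f n)
    (hb : b = a) : HasSum g b := by
  rw [hb, show g = f from funext hf]
  exact h

lemma integral_exp_sinc (r : ℝ) : ∫ u in (-1:ℝ)..1, cexp ((r : ℂ) * u * I) = 2 * (Real.sinc r : ℂ) := by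
  by_cases hr : r = 0
  · simp [hr]; norm_num
  · have h1 := intervalIntegral.smul_integral_comp_mul_left (a := -1) (b := 1)
      (fun t : ℝ => cexp ((t : ℂ) * I)) r
    rw [mul_neg, mul_one, integral_exp_mul_I_eq_sinc, Complex.real_smul] at h1
    have hr' : (r : ℂ) ≠ 0 := by exact_mod_cast hr
    apply mul_left_cancel₀ hr'
    rw [← mul_assoc, mul_comm (r : ℂ) 2, ← h1]
    simp only [Complex.ofReal_mul]

lemma avg_step (b ε a C : ℝ) (ha : 0 < a) (K : ℝ → ℂ)
    (hKb : ∀ τ, ‖K τ‖ ≤ C * (1 / (1 + τ ^ 2)))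
    (h : ∀ τ, ∀ y ∈ Icc (-ε) (b + ε),
        HasSum (fun n : ℤ => K (τ - n) * cexp (-(2 * Real.pi * n * y : ℝ) * I))
          (cexp (-(2 * Real.pi * τ * y : ℝ) * I))) :
    ∀ τ, ∀ y ∈ Icc (-(ε - a)) (b + (ε - a)),
        HasSum (fun n : ℤ => (K (τ - n) * (Real.sinc (2 * Real.pi * a * (τ - n)) : ℂ)) *
          cexp (-(2 * Real.pi * n * y : ℝ) * I))
          (cexp (-(2 * Real.pi * τ * y : ℝ) * I)) := by
  intro τ y hy
  have key : HasSum (fun n : ℤ => ∫ u in (-1:ℝ)..1, K (τ - n) *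
      cexp (-(2 * Real.pi * n * y : ℝ) * I) * cexp ((2 * Real.pi * a * (τ - n) : ℝ) * u * I))
      (∫ u in (-1:ℝ)..1, cexp (-(2 * Real.pi * τ * y : ℝ) * I)) := by
    refine intervalIntegral.hasSum_integral_of_dominated_convergence
      (fun n _ => C * (1 / (1 + (τ - n) ^ 2))) ?_ ?_ ?_ ?_ ?_
    · intro n
      refine Continuous.aestronglyMeasurable ?_
      fun_prop
    · intro n
      refine Filter.Eventually.of_forall fun u _ => ?_
      rw [norm_mul, norm_mul, ← Complex.ofReal_neg, Complex.norm_exp_ofReal_mul_I, mul_one,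
        ← Complex.ofReal_mul, Complex.norm_exp_ofReal_mul_I, mul_one]
      exact hKb _
    · exact Filter.Eventually.of_forall fun u _ => (summable_inv_one_add_sq_shift τ).mul_left C
    · simp
    · refine Filter.Eventually.of_forall fun u hu => ?_
      rw [uIoc_of_le (by norm_num)] at hu
      have hy' : y + a * u ∈ Icc (-ε) (b + ε) := by
        constructor <;> nlinarith [hy.1, hy.2, hu.1, hu.2]
      have h2 := (h τ _ hy').mul_left (cexp ((2 * Real.pi * τ * (a * u) : ℝ) * I))
      rw [← Complex.exp_add] at h2
      have h3 : HasSum (fun n : ℤ => K (τ - n) * cexp (-(2 * Real.pi * n * y : ℝ) * I) *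
          cexp ((2 * Real.pi * a * (τ - n) : ℝ) * u * I)) (cexp (-(2 * Real.pi * τ * y : ℝ) * I)) := by
        refine hasSum_of_eq h2 (fun n => ?_) ?_
        · rw [mul_left_comm, mul_assoc, ← Complex.exp_add, ← Complex.exp_add]
          congr 2
          push_cast
          ring
        · congr 1
          push_cast
          ring
      exact h3
  have h4 := key.mul_left (1 / 2 : ℂ)
  refine hasSum_of_eq h4 (fun n => ?_) ?_
  · rw [intervalIntegral.integral_const_mul, integral_exp_sinc]
    ring
  · rw [intervalIntegral.integral_const, Complex.real_smul]
    push_cast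
    ring

lemma iter_kernel (b ε C : ℝ) (K : ℝ → ℂ)
    (hKb : ∀ τ, ‖K τ‖ ≤ C * (1 / (1 + τ ^ 2)))
    (h : ∀ τ, ∀ y ∈ Icc (-ε) (b + ε),
        HasSum (fun n : ℤ => K (τ - n) * cexp (-(2 * Real.pi * n * y : ℝ) * I))
          (cexp (-(2 * Real.pi * τ * y : ℝ) * I))) (a : ℕ → ℝ) (ha : ∀ j, 0 < a j) (m : ℕ) :
    (∀ τ, ‖K τ * ((∏ j ∈ Finset.range m, Real.sinc (2 * Real.pi * a j * τ) : ℝ) : ℂ)‖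
      ≤ C * (1 / (1 + τ ^ 2))) ∧
    ∀ τ, ∀ y ∈ Icc (-(ε - ∑ j ∈ Finset.range m, a j)) (b + (ε - ∑ j ∈ Finset.range m, a j)),
        HasSum (fun n : ℤ => (K (τ - n) *
          ((∏ j ∈ Finset.range m, Real.sinc (2 * Real.pi * a j * (τ - n)) : ℝ) : ℂ)) *
          cexp (-(2 * Real.pi * n * y : ℝ) * I))
          (cexp (-(2 * Real.pi * τ * y : ℝ) * I)) := by
  induction m with
  | zero => simpa using And.intro hKb h
  | succ m ih =>
    constructor
    · intro τ
      refine le_trans ?_ (hKb τ)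
      rw [norm_mul]
      refine mul_le_of_le_one_right (norm_nonneg _) ?_
      rw [Complex.norm_real, Real.norm_eq_abs, Finset.abs_prod]
      exact Finset.prod_le_one (fun _ _ => abs_nonneg _) (fun _ _ => Real.abs_sinc_le_one _)
    · have := avg_step b _ (a m) C (ha m) _ ih.1 ih.2
      intro τ y hy
      rw [Finset.sum_range_succ, ← sub_sub] at hy
      have h2 := this τ y hy
      convert h2 using 1
      ext n
      rw [Finset.prod_range_succ]
      push_cast
      ring

/-- the one-dimensional kernel -/
lemma kernel_one (b : ℝ) (hb0 : 0 < b) (hb : b < 1) (s : ℝ) (hs : 1 < s) (N : ℝ) (hN : 0 < N) :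
    ∃ K : ℝ → ℂ, ∃ C : ℝ, 0 < C ∧ (∀ τ, ‖K τ‖ ≤ C * (1 / (1 + τ ^ 2))) ∧
      (∀ τ, ‖K τ‖ ≤ C * Real.exp (-N * |τ| ^ (1 / s))) ∧
      ∀ τ, ∀ y ∈ Icc 0 b,
        HasSum (fun n : ℤ => K (τ - n) * cexp (-(2 * Real.pi * n * y : ℝ) * I))
          (cexp (-(2 * Real.pi * τ * y : ℝ) * I)) := by
  obtain ⟨ε, hε, K, C, hC, hKb, hK⟩ := base_kernel b hb0 hb
  set s' := (1 + s) / 2 with hs'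
  have hs1 : 1 < s' := by rw [hs']; linarith
  have hss : s' < s := by rw [hs']; linarith
  have hsum : Summable (fun j : ℕ => 1 / ((j : ℝ) + 1) ^ s') := by
    have := (summable_nat_add_iff 1).mpr (Real.summable_one_div_nat_rpow.mpr hs1)
    simpa using this
  set Z := ∑' j : ℕ, 1 / ((j : ℝ) + 1) ^ s' with hZ
  have hZ0 : 0 < Z := hsum.tsum_pos (fun j => by positivity) 0 (by positivity)
  set a : ℕ → ℝ := fun j => ε / Z * (1 / ((j : ℝ) + 1) ^ s') with ha
  have ha0 : ∀ j, 0 < a j := fun j => by rw [ha]; positivity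
  have hasum : ∀ m, ∑ j ∈ Finset.range m, a j ≤ ε := by
    intro m
    rw [ha, ← Finset.mul_sum]
    have := hsum.sum_le_tsum (Finset.range m) (fun j _ => by positivity)
    calc _ ≤ ε / Z * Z := by gcongr
      _ = ε := by field_simp
  have hit := iter_kernel b ε C K hKb hK a ha0
  set Q : ℕ → ℝ → ℂ := fun m τ =>
    K τ * ((∏ j ∈ Finset.range m, Real.sinc (2 * Real.pi * a j * τ) : ℝ) : ℂ) with hQ
  have hlim : ∀ τ, ∃ z : ℂ, Filter.Tendsto (fun m => Q m τ) (Filter.hyperfilter ℕ : Filter ℕ) (nhds z) := by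
    intro τ
    have hc := isCompact_closedBall (0 : ℂ) (C * (1 / (1 + τ ^ 2)))
    obtain ⟨z, -, hz⟩ := hc.ultrafilter_le_nhds ((Filter.hyperfilter ℕ).map (fun m => Q m τ)) (by
      rw [Filter.le_principal_iff]
      refine Filter.mem_map.mpr (Filter.univ_mem' fun m => ?_)
      have := (hit m).1 τ
      simpa only [Set.mem_preimage, mem_closedBall_zero_iff] using this)
    exact ⟨z, hz⟩
  choose L hL using hlim
  have hLb : ∀ τ, ‖L τ‖ ≤ C * (1 / (1 + τ ^ 2)) := fun τ =>
    le_of_tendsto (hL τ).norm (Filter.Eventually.of_forall fun m => (hit m).1 τ)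
  -- decay
  set κ := 2 * Real.pi * (ε / Z) / Real.exp 1 with hκ
  have hκ0 : 0 < κ := by positivity
  have hdec1 : ∀ τ, ‖L τ‖ ≤ C * Real.exp (1 - (κ * |τ|) ^ (1 / s')) := by
    intro τ
    set n := ⌊(κ * |τ|) ^ (1 / s')⌋₊ with hn
    have hnle : (n : ℝ) ≤ (κ * |τ|) ^ (1 / s') := Nat.floor_le (by positivity)
    have hnlt : (κ * |τ|) ^ (1 / s') < n + 1 := Nat.lt_floor_add_one _
    have hfac : ∀ j ∈ Finset.range n, |Real.sinc (2 * Real.pi * a j * τ)| ≤ Real.exp (-1) := by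
      intro j hj
      have hj1 : ((j : ℝ) + 1) ≤ n := by exact_mod_cast Finset.mem_range.mp hj
      have h1 : ((j : ℝ) + 1) ^ s' ≤ κ * |τ| := by
        calc ((j : ℝ) + 1) ^ s' ≤ ((κ * |τ|) ^ (1 / s')) ^ s' :=
              Real.rpow_le_rpow (by positivity) (hj1.trans hnle) (by linarith)
          _ = κ * |τ| := by
              rw [← Real.rpow_mul (by positivity), one_div, inv_mul_cancel₀ (by linarith), Real.rpow_one]
      have hjp : 0 < ((j : ℝ) + 1) ^ s' := by positivity
      have h2 : Real.exp 1 ≤ |2 * Real.pi * a j * τ| := by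
        rw [abs_mul, abs_of_pos (by have := ha0 j; positivity)]
        have : κ * |τ| = 2 * Real.pi * (ε / Z) * |τ| / Real.exp 1 := by rw [hκ]; ring
        rw [this, le_div_iff₀ (Real.exp_pos 1)] at h1
        have e : 2 * Real.pi * a j * |τ| = 2 * Real.pi * (ε / Z) * |τ| / ((j : ℝ) + 1) ^ s' := by
          rw [ha]; ring
        rw [e, le_div_iff₀ hjp]
        linarith
      have hne : 2 * Real.pi * a j * τ ≠ 0 := by
        intro h0
        rw [h0, abs_zero] at h2
        exact absurd h2 (not_le.mpr (Real.exp_pos 1))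
      rw [Real.sinc_of_ne_zero hne, abs_div, Real.exp_neg, ← one_div]
      exact div_le_div₀ (by norm_num) (Real.abs_sin_le_one _) (Real.exp_pos 1) h2
    refine le_of_tendsto (hL τ).norm ?_
    have hev : ∀ᶠ m in (Filter.hyperfilter ℕ : Filter ℕ), n ≤ m :=
      (Filter.eventually_ge_atTop n).filter_mono Nat.hyperfilter_le_atTop
    filter_upwards [hev] with m hm
    rw [hQ]
    simp only []
    rw [norm_mul, Complex.norm_real, Real.norm_eq_abs, Finset.abs_prod]
    have hKC : ‖K τ‖ ≤ C := (hKb τ).trans (by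
      refine mul_le_of_le_one_right hC.le ?_
      rw [div_le_one (by positivity)]
      nlinarith [sq_nonneg τ])
    refine mul_le_mul hKC ?_ (Finset.prod_nonneg fun _ _ => abs_nonneg _) hC.le
    calc ∏ j ∈ Finset.range m, |Real.sinc (2 * Real.pi * a j * τ)|
        ≤ ∏ j ∈ Finset.range n, |Real.sinc (2 * Real.pi * a j * τ)| := by
          rw [← Finset.prod_range_mul_prod_Ico _ hm]
          exact mul_le_of_le_one_right (Finset.prod_nonneg fun _ _ => abs_nonneg _)
            (Finset.prod_le_one (fun _ _ => abs_nonneg _) (fun _ _ => Real.abs_sinc_le_one _))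
      _ ≤ ∏ j ∈ Finset.range n, Real.exp (-1) :=
          Finset.prod_le_prod (fun _ _ => abs_nonneg _) hfac
      _ = Real.exp (-n) := by
          rw [Finset.prod_const, Finset.card_range, ← Real.exp_nat_mul]; congr 1; ring
      _ ≤ _ := Real.exp_le_exp.mpr (by linarith)
  have hgrow : ∃ M : ℝ, ∀ t : ℝ, 0 ≤ t → N * t ^ (1 / s) - (κ * t) ^ (1 / s') ≤ M := by
    have hp : 1 / s < 1 / s' := one_div_lt_one_div_of_lt (by linarith) hss
    have hp0 : 0 < 1 / s := by positivity
    set p := 1 / s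
    set p' := 1 / s'
    set T := (N / κ ^ p') ^ (1 / (p' - p)) with hT
    refine ⟨N * T ^ p, fun t ht => ?_⟩
    rw [Real.mul_rpow hκ0.le ht]
    have hκp : 0 < κ ^ p' := by positivity
    rcases le_or_gt t T with h | h
    · have h1 : t ^ p ≤ T ^ p := Real.rpow_le_rpow ht h hp0.le
      have h2 : 0 ≤ κ ^ p' * t ^ p' := by positivity
      nlinarith
    · have hT0 : 0 ≤ T := by positivity
      have ht0 : 0 < t := lt_of_le_of_lt hT0 h
      have h1 : N / κ ^ p' ≤ t ^ (p' - p) := by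
        have := Real.rpow_le_rpow hT0 h.le (z := p' - p) (by linarith)
        rwa [hT, ← Real.rpow_mul (by positivity), one_div, inv_mul_cancel₀ (by linarith),
          Real.rpow_one] at this
      rw [div_le_iff₀ hκp] at h1
      have h2 : t ^ p' = t ^ (p' - p) * t ^ p := by
        rw [← Real.rpow_add ht0]; congr 1; ring
      have h3 : 0 < t ^ p := by positivity
      have h4 : 0 ≤ N * T ^ p := by positivity
      rw [h2]
      nlinarith
  obtain ⟨M, hM⟩ := hgrow
  have hMC : C ≤ C * Real.exp (1 + |M|) := 
    le_mul_of_one_le_right hC.le (Real.one_le_exp (by positivity))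
  refine ⟨L, C * Real.exp (1 + |M|), by positivity, ?_, ?_, ?_⟩
  · intro τ
    exact (hLb τ).trans (by gcongr)
  · intro τ
    refine (hdec1 τ).trans ?_
    rw [mul_assoc, ← Real.exp_add]
    gcongr
    have := hM |τ| (abs_nonneg _)
    have := le_abs_self M
    linarith
  · intro τ y hy
    have hsL : Summable (fun n : ℤ => L (τ - n) * cexp (-(2 * Real.pi * n * y : ℝ) * I)) := by
      refine Summable.of_norm_bounded ((summable_inv_one_add_sq_shift τ).mul_left C) ?_
      intro n
      rw [norm_mul, ← Complex.ofReal_neg, Complex.norm_exp_ofReal_mul_I, mul_one]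
      exact hLb _
    have hT := tendsto_tsum_of_dominated_convergence (𝓕 := (Filter.hyperfilter ℕ : Filter ℕ))
      (f := fun m (n : ℤ) => Q m (τ - n) * cexp (-(2 * Real.pi * n * y : ℝ) * I))
      (g := fun n : ℤ => L (τ - n) * cexp (-(2 * Real.pi * n * y : ℝ) * I))
      ((summable_inv_one_add_sq_shift τ).mul_left C)
      (fun n => (hL (τ - n)).mul_const _)
      (Filter.Eventually.of_forall fun m n => by
        rw [norm_mul, ← Complex.ofReal_neg, Complex.norm_exp_ofReal_mul_I, mul_one]
        exact (hit m).1 _)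
    have hconst : ∀ m, ∑' n : ℤ, Q m (τ - n) * cexp (-(2 * Real.pi * n * y : ℝ) * I) =
        cexp (-(2 * Real.pi * τ * y : ℝ) * I) := fun m =>
      ((hit m).2 τ y ⟨by linarith [hasum m, hy.1], by linarith [hasum m, hy.2]⟩).tsum_eq
    simp only [hconst] at hT
    rw [tendsto_nhds_unique tendsto_const_nhds hT]
    exact hsL.hasSum

lemma hasSum_prod_pi {R : Type*} [NormedCommRing R] [NormOneClass R] [CompleteSpace R] (d : ℕ) :
    ∀ (f : Fin d → ℤ → R) (a : Fin d → R), (∀ i, HasSum (f i) (a i)) →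
      (∀ i, Summable (fun n => ‖f i n‖)) →
      HasSum (fun k : Fin d → ℤ => ∏ i, f i (k i)) (∏ i, a i) ∧
        Summable (fun k : Fin d → ℤ => ‖∏ i, f i (k i)‖) := by
  induction d with
  | zero =>
    intro f a _ _
    simp only [Finset.univ_eq_empty, Finset.prod_empty]
    exact ⟨hasSum_unique (fun _ : Fin 0 → ℤ => (1 : R)),
      (hasSum_unique (fun _ : Fin 0 → ℤ => ‖(1 : R)‖)).summable⟩
  | succ d ih =>
    intro f a hf hn
    obtain ⟨h1, h2⟩ := ih (fun i => f i.succ) (fun i => a i.succ) (fun i => hf _) (fun i => hn _)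
    have hsm : Summable (fun x : ℤ × (Fin d → ℤ) => f 0 x.1 * ∏ i, f (Fin.succ i) (x.2 i)) :=
      summable_mul_of_summable_norm (f := f 0)
        (g := fun k : Fin d → ℤ => ∏ i, f (Fin.succ i) (k i)) (hn 0) h2
    have hmul : HasSum (fun x : ℤ × (Fin d → ℤ) => f 0 x.1 * ∏ i, f (Fin.succ i) (x.2 i))
      (a 0 * ∏ i : Fin d, a (Fin.succ i)) := by
      rw [← (hf 0).tsum_eq, ← h1.tsum_eq, tsum_mul_tsum_of_summable_norm (hn 0) h2]
      exact hsm.hasSum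
    have hmuln : Summable (fun x : ℤ × (Fin d → ℤ) => ‖f 0 x.1 * ∏ i, f (Fin.succ i) (x.2 i)‖) :=
      Summable.mul_norm (f := f 0)
        (g := fun k : Fin d → ℤ => ∏ i, f (Fin.succ i) (k i)) (hn 0) h2
    constructor
    · rw [← (Fin.consEquiv (fun _ : Fin (d + 1) => ℤ)).hasSum_iff, Fin.prod_univ_succ]
      convert! hmul using 1
      ext k
      simp [Fin.prod_univ_succ, Fin.consEquiv]
    · rw [← (Fin.consEquiv (fun _ : Fin (d + 1) => ℤ)).summable_iff]
      convert! hmuln using 1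
      ext k
      simp [Fin.prod_univ_succ, Fin.consEquiv]

lemma tsum_inv_bound : ∃ M : ℝ, ∀ τ : ℝ, ∑' n : ℤ, 1 / (1 + (τ - n) ^ 2) ≤ M := by
  refine ⟨∑' n : ℤ, 3 * (1 / (1 + ((0 : ℝ) - n) ^ 2)), fun τ => ?_⟩
  rw [← (Equiv.addRight ⌊τ⌋).tsum_eq]
  have e : ∀ n : ℤ, (1 : ℝ) / (1 + (τ - ((Equiv.addRight ⌊τ⌋ n : ℤ) : ℝ)) ^ 2) =
      1 / (1 + (Int.fract τ - n) ^ 2) := by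
    intro n
    simp only [Equiv.coe_addRight, Int.cast_add, Int.fract]
    congr 3
    ring
  simp only [e]
  refine Summable.tsum_le_tsum (fun n => ?_) (summable_inv_one_add_sq_shift _)
    ((summable_inv_one_add_sq_shift 0).mul_left 3)
  have h0 := Int.fract_nonneg τ
  have h1 := (Int.fract_lt_one τ).le
  rw [mul_one_div, div_le_div_iff₀ (by positivity) (by positivity)]
  nlinarith [sq_nonneg ((n : ℝ) - 2 * Int.fract τ), sq_nonneg (Int.fract τ - n)]

lemma growth (p : ℝ) (hp : 0 < p) (r : ℕ) :
    ∃ C : ℝ, 0 < C ∧ ∀ t : ℝ, 0 ≤ t → (1 + t) ^ r ≤ C * Real.exp (t ^ p) := by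
  set m := ⌈(r : ℝ) / p⌉₊ with hm
  refine ⟨2 ^ r * (1 + m.factorial), by positivity, fun t ht => ?_⟩
  have hexp : 1 ≤ Real.exp (t ^ p) := Real.one_le_exp (by positivity)
  rcases le_or_gt t 1 with h | h
  · calc (1 + t) ^ r ≤ 2 ^ r := by gcongr; linarith
      _ ≤ 2 ^ r * ((1 + m.factorial) * Real.exp (t ^ p)) := by
        refine le_mul_of_one_le_right (by positivity) ?_
        have : (0 : ℝ) ≤ m.factorial := by positivity
        nlinarith
      _ = _ := by ring
  · have h1 : (t ^ p) ^ m / m.factorial ≤ Real.exp (t ^ p) := Real.pow_div_factorial_le_exp _ (by positivity) m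
    rw [div_le_iff₀ (by positivity)] at h1
    have h2 : t ^ r ≤ (t ^ p) ^ m := by
      rw [← Real.rpow_natCast, ← Real.rpow_natCast, ← Real.rpow_mul ht]
      refine Real.rpow_le_rpow_of_exponent_le h.le ?_
      have := Nat.le_ceil ((r : ℝ) / p)
      rw [div_le_iff₀ hp] at this
      rw [hm]; linarith
    calc (1 + t) ^ r ≤ (2 * t) ^ r := by gcongr; linarith
      _ = 2 ^ r * t ^ r := mul_pow _ _ _
      _ ≤ 2 ^ r * ((1 + m.factorial) * Real.exp (t ^ p)) := by
        gcongr
        nlinarith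
      _ = _ := by ring

lemma weight_tsum {ι : Type*} (q : ℝ) (hq : 1 ≤ q) (w f : ι → ℝ≥0∞) :
    (∑' i, w i * f i) ^ q ≤ (∑' i, w i) ^ (q - 1) * ∑' i, w i * f i ^ q := by
  have hq0 : 0 < q := by linarith
  have key : ∑' i, w i * f i ≤ (∑' i, w i) ^ (1 - q⁻¹) * (∑' i, w i * f i ^ q) ^ q⁻¹ := by
    rw [ENNReal.tsum_eq_iSup_sum]
    refine iSup_le fun s => ?_
    refine (ENNReal.inner_le_weight_mul_Lp_of_nonneg s hq w f).trans ?_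
    have h1 : 0 ≤ 1 - q⁻¹ := by
      have := inv_le_one_of_one_le₀ hq
      linarith
    gcongr
    · exact ENNReal.sum_le_tsum s
    · exact ENNReal.sum_le_tsum (f := fun i => w i * f i ^ q) s
  refine (ENNReal.rpow_le_rpow key hq0.le).trans ?_
  rw [ENNReal.mul_rpow_of_nonneg _ _ hq0.le, ← ENNReal.rpow_mul, ← ENNReal.rpow_mul,
    inv_mul_cancel₀ hq0.ne', ENNReal.rpow_one]
  have : (1 - q⁻¹) * q = q - 1 := by field_simp
  rw [this]

lemma cone_sep (Γ₀ Γ : Set (EuclideanSpace ℝ (Fin d)))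
    (h₀c : IsCone Γ₀) (hΓo : IsOpen Γ) (hΓc : IsCone Γ) (hsub : closure Γ₀ \ {0} ⊆ Γ) :
    ∃ R : ℝ, 0 < R ∧ ∀ ξ ∈ Γ₀, ∀ l, l ∉ Γ → ‖l‖ ≤ R * ‖ξ - l‖ := by
  have hcomp : IsCompact (closure Γ₀ ∩ Metric.sphere 0 1) :=
    (isCompact_sphere 0 1).inter_left isClosed_closure
  have hs : closure Γ₀ ∩ Metric.sphere 0 1 ⊆ Γ := by
    rintro x ⟨hx, hx1⟩
    refine hsub ⟨hx, ?_⟩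
    rintro rfl
    simp at hx1
  obtain ⟨δ, hδ, hδs⟩ := hcomp.exists_thickening_subset_open hΓo hs
  refine ⟨1 + 1 / δ, by positivity, fun ξ hξ l hl => ?_⟩
  have hξ0 : ξ ≠ 0 := fun h => h₀c.1 (h ▸ hξ)
  have hn : 0 < ‖ξ‖ := norm_pos_iff.mpr hξ0
  have h1 : δ * ‖ξ‖ ≤ ‖ξ - l‖ := by
    by_contra hcon
    push Not at hcon
    apply hl
    have hm : ‖ξ‖⁻¹ • l ∈ Γ := by
      apply hδs
      rw [Metric.mem_thickening_iff]
      refine ⟨‖ξ‖⁻¹ • ξ, ⟨subset_closure (h₀c.2 ξ hξ _ (inv_pos.mpr hn)), ?_⟩, ?_⟩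
      · simp [norm_smul, hn.ne']
      · rw [dist_comm, dist_eq_norm, ← smul_sub, norm_smul, norm_inv, norm_norm, inv_mul_lt_iff₀ hn]
        linarith
    have := hΓc.2 _ hm ‖ξ‖ hn
    rwa [smul_smul, mul_inv_cancel₀ hn.ne', one_smul] at this
  have h2 : ‖l‖ ≤ ‖ξ‖ + ‖ξ - l‖ := by
    have := norm_sub_le ξ (ξ - l)
    simpa using this
  have h3 : ‖ξ‖ ≤ 1 / δ * ‖ξ - l‖ := by
    rw [one_div, ← div_eq_inv_mul, le_div_iff₀ hδ]; linarith
  linarith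

/-- frequency coordinates -/
def tauOf (A : Matrix (Fin d) (Fin d) ℝ) (c : ℝ) (ξ : EuclideanSpace ℝ (Fin d)) : Fin d → ℝ :=
  c⁻¹ • A.transpose.mulVec ξ.ofLp

lemma tau_norm (A : Matrix (Fin d) (Fin d) ℝ) (hA : IsUnit A.det) (c : ℝ) (hc0 : 0 < c) :
    ∃ R : ℝ, 0 < R ∧ ∀ ξ, ∀ k : Fin d → ℤ,
      ‖ξ - dualLatPt A c k‖ ≤ R * ‖tauOf A c ξ - fun i => (k i : ℝ)‖ ∧
      ‖tauOf A c ξ - fun i => (k i : ℝ)‖ ≤ R * ‖ξ - dualLatPt A c k‖ := by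
  have hAt : IsUnit A.transpose.det := by rwa [Matrix.det_transpose]
  let T : EuclideanSpace ℝ (Fin d) →ₗ[ℝ] (Fin d → ℝ) :=
    c⁻¹ • (A.transpose.mulVecLin ∘ₗ (WithLp.linearEquiv 2 ℝ (Fin d → ℝ)).toLinearMap)
  let S : (Fin d → ℝ) →ₗ[ℝ] EuclideanSpace ℝ (Fin d) :=
    c • ((WithLp.linearEquiv 2 ℝ (Fin d → ℝ)).symm.toLinearMap ∘ₗ A.transpose⁻¹.mulVecLin)
  have hT : ∀ ξ, T ξ = tauOf A c ξ := fun ξ => rfl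
  have hS : ∀ k : Fin d → ℤ, S (fun i => (k i : ℝ)) = dualLatPt A c k := fun k => rfl
  have hST : ∀ ξ, S (T ξ) = ξ := by
    intro ξ
    simp only [S, T, LinearMap.smul_apply, LinearMap.comp_apply, map_smul, smul_smul,
      LinearEquiv.coe_coe, Matrix.mulVecLin_apply,
      Matrix.mulVec_mulVec, Matrix.nonsing_inv_mul _ hAt, Matrix.one_mulVec,
      LinearEquiv.symm_apply_apply]
    rw [inv_mul_cancel₀ hc0.ne', one_smul]
  have hTS : ∀ t, T (S t) = t := by
    intro ξ
    simp only [S, T, LinearMap.smul_apply, LinearMap.comp_apply, map_smul, smul_smul,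
      mul_inv_cancel₀ hc0.ne', one_smul, LinearEquiv.coe_coe, Matrix.mulVecLin_apply,
      Matrix.mulVec_mulVec, Matrix.mul_nonsing_inv _ hAt, Matrix.one_mulVec,
      LinearEquiv.apply_symm_apply]
  let T' := LinearMap.toContinuousLinearMap T
  let S' := LinearMap.toContinuousLinearMap S
  refine ⟨‖T'‖ + ‖S'‖ + 1, by positivity, fun ξ k => ⟨?_, ?_⟩⟩
  · have e : ξ - dualLatPt A c k = S' (tauOf A c ξ - fun i => (k i : ℝ)) := by
      change _ = S _
      rw [map_sub, hS, ← hT, hST]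
    rw [e]
    refine (S'.le_opNorm _).trans ?_
    gcongr
    linarith [norm_nonneg T']
  · have e : (tauOf A c ξ - fun i => (k i : ℝ)) = T' (ξ - dualLatPt A c k) := by
      change _ = T _
      rw [map_sub, ← hS, hT, hTS]
    rw [e]
    refine (T'.le_opNorm _).trans ?_
    gcongr
    linarith [norm_nonneg S']

lemma inner_tau (A : Matrix (Fin d) (Fin d) ℝ) (c : ℝ) (hc0 : 0 < c) (t : Fin d → ℝ)
    (ξ : EuclideanSpace ℝ (Fin d)) :
    (⟪toE (A.mulVec t), ξ⟫ : ℝ) = ∑ i, 2 * Real.pi * tauOf A c ξ i * (c * t i / (2 * Real.pi)) := by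
  have : (⟪toE (A.mulVec t), ξ⟫ : ℝ) = A.mulVec t ⬝ᵥ ξ.ofLp := by
    rw [EuclideanSpace.inner_eq_star_dotProduct, star_trivial, dotProduct_comm]
    rfl
  rw [this, dotProduct_comm, Matrix.dotProduct_mulVec, ← Matrix.mulVec_transpose, dotProduct]
  refine Finset.sum_congr rfl fun i _ => ?_
  simp only [tauOf, Pi.smul_apply, smul_eq_mul]
  field_simp

lemma tau_lat (A : Matrix (Fin d) (Fin d) ℝ) (hA : IsUnit A.det) (c : ℝ) (hc0 : 0 < c)
    (k : Fin d → ℤ) : tauOf A c (dualLatPt A c k) = fun i => (k i : ℝ) := by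
  obtain ⟨R, hR, h⟩ := tau_norm A hA c hc0
  have := (h (dualLatPt A c k) k).2
  rw [sub_self, norm_zero, mul_zero, norm_le_zero_iff, sub_eq_zero] at this
  exact this

lemma exp_expand (A : Matrix (Fin d) (Fin d) ℝ) (hA : IsUnit A.det) (c : ℝ) (hc0 : 0 < c)
    (x₁ : EuclideanSpace ℝ (Fin d)) (K : ℝ → ℂ) (C : ℝ)
    (hKb : ∀ τ, ‖K τ‖ ≤ C * (1 / (1 + τ ^ 2)))
    (hK : ∀ τ, ∀ y ∈ Icc 0 (c / (2 * Real.pi)),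
        HasSum (fun n : ℤ => K (τ - n) * cexp (-(2 * Real.pi * n * y : ℝ) * I))
          (cexp (-(2 * Real.pi * τ * y : ℝ) * I))) (ξ x : EuclideanSpace ℝ (Fin d))
    (hx : x ∈ lattPara A x₁) :
    HasSum (fun k : Fin d → ℤ => (∏ i, K (tauOf A c ξ i - k i)) *
      cexp (-(⟪x₁, ξ - dualLatPt A c k⟫ : ℝ) * I) * cexp (-(⟪x, dualLatPt A c k⟫ : ℝ) * I))
      (cexp (-(⟪x, ξ⟫ : ℝ) * I)) := by
  obtain ⟨t, ht, rfl⟩ := hx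
  have hy : ∀ i, c * t i / (2 * Real.pi) ∈ Icc 0 (c / (2 * Real.pi)) := by
    intro i
    have := ht i (mem_univ i)
    have h0 := this.1
    have h1 := this.2
    constructor
    · positivity
    · gcongr
      nlinarith
  have hp := (hasSum_prod_pi d (fun i (n : ℤ) => K (tauOf A c ξ i - n) *
    cexp (-(2 * Real.pi * n * (c * t i / (2 * Real.pi)) : ℝ) * I))
    (fun i => cexp (-(2 * Real.pi * tauOf A c ξ i * (c * t i / (2 * Real.pi)) : ℝ) * I))
    (fun i => hK _ _ (hy i)) (fun i => by
      refine Summable.of_nonneg_of_le (fun _ => norm_nonneg _) (fun n => ?_)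
        ((summable_inv_one_add_sq_shift (tauOf A c ξ i)).mul_left C)
      rw [norm_mul, ← Complex.ofReal_neg, Complex.norm_exp_ofReal_mul_I, mul_one]
      exact hKb _)).1
  have hprod : ∀ ζ : EuclideanSpace ℝ (Fin d),
      ∏ i, cexp (-(2 * Real.pi * tauOf A c ζ i * (c * t i / (2 * Real.pi)) : ℝ) * I) =
      cexp (-(⟪toE (A.mulVec t), ζ⟫ : ℝ) * I) := by
    intro ζ
    rw [← Complex.exp_sum, inner_tau A c hc0, ← Finset.sum_mul, Finset.sum_neg_distrib,
      Complex.ofReal_sum]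
  have h2 := hp.mul_left (cexp (-(⟪x₁, ξ⟫ : ℝ) * I))
  refine hasSum_of_eq h2 (fun k => ?_) ?_
  · rw [Finset.prod_mul_distrib]
    have := hprod (dualLatPt A c k)
    rw [tau_lat A hA c hc0] at this
    rw [this, mul_left_comm, mul_assoc, ← Complex.exp_add, ← Complex.exp_add]
    congr 2
    rw [inner_sub_right, inner_add_left]
    push_cast
    ring
  · rw [hprod, ← Complex.exp_add]
    congr 1
    rw [inner_add_left]
    push_cast
    ring

lemma FT_norm_le (f : EuclideanSpace ℝ (Fin d) → ℂ) (ξ : EuclideanSpace ℝ (Fin d)) :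
    ‖FT f ξ‖ ≤ ((2 * Real.pi) ^ (-(d : ℝ) / 2) : ℝ) * ∫ x, ‖f x‖ := by
  rw [FT, norm_mul, Complex.norm_real, Real.norm_of_nonneg (by positivity)]
  gcongr
  refine (norm_integral_le_integral_norm _).trans (le_of_eq ?_)
  congr 1
  ext x
  rw [norm_mul, ← Complex.ofReal_neg, Complex.norm_exp_ofReal_mul_I, mul_one]

lemma FT_bound (A : Matrix (Fin d) (Fin d) ℝ) (hA : IsUnit A.det) (c : ℝ) (hc0 : 0 < c)
    (x₁ : EuclideanSpace ℝ (Fin d)) (K : ℝ → ℂ) (C : ℝ)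
    (hKb : ∀ τ, ‖K τ‖ ≤ C * (1 / (1 + τ ^ 2)))
    (hK : ∀ τ, ∀ y ∈ Icc 0 (c / (2 * Real.pi)),
        HasSum (fun n : ℤ => K (τ - n) * cexp (-(2 * Real.pi * n * y : ℝ) * I))
          (cexp (-(2 * Real.pi * τ * y : ℝ) * I)))
    (f : EuclideanSpace ℝ (Fin d) → ℂ) (hf : Integrable f) (hfD : ∀ x, x ∉ lattPara A x₁ → f x = 0)
    (ξ : EuclideanSpace ℝ (Fin d)) :
    ENNReal.ofReal ‖FT f ξ‖ ≤ ∑' k : Fin d → ℤ,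
      ENNReal.ofReal ((∏ i, ‖K (tauOf A c ξ i - k i)‖) * ‖FT f (dualLatPt A c k)‖) := by
  have hsumK : Summable (fun k : Fin d → ℤ => ∏ i, ‖K (tauOf A c ξ i - k i)‖) := by
    have hs : ∀ i, Summable (fun n : ℤ => ‖K (tauOf A c ξ i - n)‖) := fun i =>
      Summable.of_nonneg_of_le (fun _ => norm_nonneg _) (fun n => hKb _)
        ((summable_inv_one_add_sq_shift (tauOf A c ξ i)).mul_left C)
    exact (hasSum_prod_pi d (fun i (n : ℤ) => ‖K (tauOf A c ξ i - n)‖)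
      (fun i => ∑' n : ℤ, ‖K (tauOf A c ξ i - n)‖) (fun i => (hs i).hasSum)
      (fun i => by simpa only [norm_norm] using hs i)).1.summable
  have hint : ∀ ζ : EuclideanSpace ℝ (Fin d),
      Integrable (fun x => f x * cexp (-(⟪x, ζ⟫ : ℝ) * I)) := by
    intro ζ
    refine hf.mul_bdd (c := 1) (Continuous.aestronglyMeasurable (by fun_prop)) ?_
    refine Filter.Eventually.of_forall fun x => ?_
    rw [← Complex.ofReal_neg, Complex.norm_exp_ofReal_mul_I]
  have hmain : HasSum (fun k : Fin d → ℤ => ∫ x, (∏ i, K (tauOf A c ξ i - k i)) *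
      cexp (-(⟪x₁, ξ - dualLatPt A c k⟫ : ℝ) * I) * (f x * cexp (-(⟪x, dualLatPt A c k⟫ : ℝ) * I)))
      (∫ x, f x * cexp (-(⟪x, ξ⟫ : ℝ) * I)) := by
    have hn : ∀ k : Fin d → ℤ, ∀ x, ‖(∏ i, K (tauOf A c ξ i - k i)) *
      cexp (-(⟪x₁, ξ - dualLatPt A c k⟫ : ℝ) * I) * (f x * cexp (-(⟪x, dualLatPt A c k⟫ : ℝ) * I))‖
       = (∏ i, ‖K (tauOf A c ξ i - k i)‖) * ‖f x‖ := by
      intro k x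
      rw [norm_mul, norm_mul, norm_mul, ← Complex.ofReal_neg, ← Complex.ofReal_neg,
        Complex.norm_exp_ofReal_mul_I, Complex.norm_exp_ofReal_mul_I, mul_one, mul_one, norm_prod]
    refine hasSum_of_eq (hasSum_integral_of_summable_integral_norm (F := fun (k : Fin d → ℤ) x => (∏ i, K (tauOf A c ξ i - k i)) *
      cexp (-(⟪x₁, ξ - dualLatPt A c k⟫ : ℝ) * I) * (f x * cexp (-(⟪x, dualLatPt A c k⟫ : ℝ) * I)))
      (fun k => (hint _).const_mul _) ?_) (fun _ => rfl) ?_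
    · simp only [hn, integral_const_mul]
      exact hsumK.mul_right _
    · congr 1
      ext x
      by_cases hx : x ∈ lattPara A x₁
      · have := (exp_expand A hA c hc0 x₁ K C hKb hK ξ x hx).mul_left (f x)
        rw [← this.tsum_eq]
        congr 1
        ext k
        ring
      · simp [hfD x hx]
  have hFT : HasSum (fun k : Fin d → ℤ => (∏ i, K (tauOf A c ξ i - k i)) *
      cexp (-(⟪x₁, ξ - dualLatPt A c k⟫ : ℝ) * I) * FT f (dualLatPt A c k)) (FT f ξ) := by
    refine hasSum_of_eq (hmain.mul_left (((2 * Real.pi) ^ (-(d : ℝ) / 2) : ℝ) : ℂ)) (fun k => ?_) rfl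
    rw [integral_const_mul, FT]
    ring
  have hnorm : ∀ k : Fin d → ℤ, ‖(∏ i, K (tauOf A c ξ i - k i)) *
      cexp (-(⟪x₁, ξ - dualLatPt A c k⟫ : ℝ) * I) * FT f (dualLatPt A c k)‖ =
      (∏ i, ‖K (tauOf A c ξ i - k i)‖) * ‖FT f (dualLatPt A c k)‖ := by
    intro k
    rw [norm_mul, norm_mul, ← Complex.ofReal_neg,
        Complex.norm_exp_ofReal_mul_I, mul_one, norm_prod]
  have hsn : Summable (fun k : Fin d → ℤ =>
      (∏ i, ‖K (tauOf A c ξ i - k i)‖) * ‖FT f (dualLatPt A c k)‖) :=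
    Summable.of_nonneg_of_le (fun k => by positivity)
      (fun k => mul_le_mul_of_nonneg_left (FT_norm_le f _) (by positivity)) (hsumK.mul_right _)
  rw [← ENNReal.ofReal_tsum_of_nonneg (fun k => by positivity) hsn]
  refine ENNReal.ofReal_le_ofReal ?_
  rw [← hFT.tsum_eq]
  refine (norm_tsum_le_tsum_norm ?_).trans (le_of_eq ?_)
  · simpa only [hnorm] using hsn
  · simp only [hnorm]

lemma H_sum (A : Matrix (Fin d) (Fin d) ℝ) (hA : IsUnit A.det) (c : ℝ) (hc0 : 0 < c)
    (p : ℝ) (hp : 0 < p) :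
    ∃ M : ℝ, ∀ ξ, ∑' k : Fin d → ℤ, ENNReal.ofReal (Real.exp (-‖ξ - dualLatPt A c k‖ ^ p)) ≤
      ENNReal.ofReal M := by
  obtain ⟨R, hR, hτ⟩ := tau_norm A hA c hc0
  obtain ⟨C, hC, hg⟩ := growth p hp (2 * d)
  obtain ⟨M, hM⟩ := tsum_inv_bound
  refine ⟨(1 + R) ^ (2 * d) * C * M ^ d, fun ξ => ?_⟩
  have hps := (hasSum_prod_pi d (fun i (n : ℤ) => 1 / (1 + (tauOf A c ξ i - n) ^ 2))
      (fun i => ∑' n : ℤ, 1 / (1 + (tauOf A c ξ i - n) ^ 2))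
      (fun i => (summable_inv_one_add_sq_shift _).hasSum)
      (fun i => (summable_inv_one_add_sq_shift (tauOf A c ξ i)).norm)).1
  have hterm : ∀ k : Fin d → ℤ, Real.exp (-‖ξ - dualLatPt A c k‖ ^ p) ≤
      (1 + R) ^ (2 * d) * C * ∏ i, 1 / (1 + (tauOf A c ξ i - k i) ^ 2) := by
    intro k
    set t := ‖ξ - dualLatPt A c k‖ with ht
    have ht0 : 0 ≤ t := norm_nonneg _
    have hi : ∀ i, 1 + (tauOf A c ξ i - k i) ^ 2 ≤ ((1 + R) * (1 + t)) ^ 2 := by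
      intro i
      have h1 : |tauOf A c ξ i - k i| ≤ R * t :=
        (norm_le_pi_norm (tauOf A c ξ - fun i => (k i : ℝ)) i).trans (hτ ξ k).2
      have h2 : (tauOf A c ξ i - k i) ^ 2 ≤ (R * t) ^ 2 := sq_le_sq' (by linarith [neg_abs_le (tauOf A c ξ i - k i)]) ((le_abs_self _).trans h1)
      have h3 : 0 ≤ R * t := by positivity
      nlinarith [mul_nonneg h3 hR.le, mul_nonneg h3 ht0]
    have hprod : ∏ i, (1 + (tauOf A c ξ i - k i) ^ 2) ≤ (1 + R) ^ (2 * d) * (C * Real.exp (t ^ p)) := by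
      calc ∏ i, (1 + (tauOf A c ξ i - k i) ^ 2) ≤ ∏ _i : Fin d, ((1 + R) * (1 + t)) ^ 2 :=
            Finset.prod_le_prod (fun i _ => by positivity) (fun i _ => hi i)
        _ = (1 + R) ^ (2 * d) * (1 + t) ^ (2 * d) := by
            rw [Finset.prod_const, Finset.card_univ, Fintype.card_fin, ← pow_mul, mul_pow]
        _ ≤ _ := by
            gcongr
            exact hg t ht0
    have hpos : 0 < ∏ i, (1 + (tauOf A c ξ i - k i) ^ 2) := Finset.prod_pos fun i _ => by positivity
    rw [Finset.prod_div_distrib, Finset.prod_const_one, mul_one_div, le_div_iff₀ hpos, Real.exp_neg,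
      inv_mul_le_iff₀ (Real.exp_pos _)]
    linarith
  calc _ ≤ ∑' k : Fin d → ℤ, ENNReal.ofReal
        ((1 + R) ^ (2 * d) * C * ∏ i, 1 / (1 + (tauOf A c ξ i - k i) ^ 2)) :=
        ENNReal.tsum_le_tsum fun k => ENNReal.ofReal_le_ofReal (hterm k)
    _ = ENNReal.ofReal ((1 + R) ^ (2 * d) * C *
          ∏ i, ∑' n : ℤ, 1 / (1 + (tauOf A c ξ i - n) ^ 2)) := by
        rw [← (hps.mul_left _).tsum_eq, ENNReal.ofReal_tsum_of_nonneg (fun k => ?_)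
          (hps.mul_left _).summable]
        exact mul_nonneg (by positivity) (Finset.prod_nonneg fun i _ => by positivity)
    _ ≤ _ := by
        refine ENNReal.ofReal_le_ofReal ?_
        gcongr
        calc _ ≤ ∏ _i : Fin d, M := Finset.prod_le_prod
              (fun i _ => tsum_nonneg fun n => by positivity) (fun i _ => hM _)
          _ = _ := by simp

lemma H_int (p : ℝ) (hp : 0 < p) :
    ∫⁻ ξ : EuclideanSpace ℝ (Fin d), ENNReal.ofReal (Real.exp (-‖ξ‖ ^ p)) < ∞ := by
  obtain ⟨C, hC, hg⟩ := growth p hp (d + 1)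
  have hfin : ∫⁻ ξ : EuclideanSpace ℝ (Fin d), ENNReal.ofReal ((1 + ‖ξ‖) ^ (-((d : ℝ) + 1))) < ∞ :=
    finite_integral_one_add_norm (by simp)
  calc _ ≤ ∫⁻ ξ : EuclideanSpace ℝ (Fin d),
        ENNReal.ofReal C * ENNReal.ofReal ((1 + ‖ξ‖) ^ (-((d : ℝ) + 1))) := by
        refine lintegral_mono fun ξ => ?_
        rw [← ENNReal.ofReal_mul hC.le]
        refine ENNReal.ofReal_le_ofReal ?_
        have h1 := hg ‖ξ‖ (norm_nonneg _)
        have h0 : 0 < 1 + ‖ξ‖ := by positivity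
        have e : (1 + ‖ξ‖) ^ (-((d : ℝ) + 1)) = ((1 + ‖ξ‖) ^ (d + 1))⁻¹ := by
          rw [Real.rpow_neg h0.le, ← Real.rpow_natCast]
          push_cast
          rfl
        rw [e, Real.exp_neg, ← div_eq_mul_inv, le_div_iff₀ (by positivity),
          inv_mul_le_iff₀ (Real.exp_pos _)]
        linarith
    _ = _ := lintegral_const_mul' _ _ ENNReal.ofReal_ne_top
    _ < ∞ := ENNReal.mul_lt_top ENNReal.ofReal_lt_top hfin

lemma K_decay (K : ℝ → ℂ) (C N p : ℝ) (hp : 0 < p) (hC : 0 < C) (hN : 0 < N)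
    (hK : ∀ τ, ‖K τ‖ ≤ C * Real.exp (-N * |τ| ^ p)) (θ : Fin d → ℝ) :
    ∏ i, ‖K (θ i)‖ ≤ C ^ d * Real.exp (-N * ‖θ‖ ^ p) := by
  have hS : ‖θ‖ ^ p ≤ ∑ i, |θ i| ^ p := by
    have hS0 : 0 ≤ ∑ i, |θ i| ^ p := Finset.sum_nonneg fun i _ => by positivity
    have h1 : ‖θ‖ ≤ (∑ i, |θ i| ^ p) ^ (p⁻¹) := by
      rw [pi_norm_le_iff_of_nonneg (by positivity)]
      intro i
      have : |θ i| ^ p ≤ ∑ i, |θ i| ^ p :=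
        Finset.single_le_sum (f := fun i => |θ i| ^ p) (fun i _ => by positivity) (Finset.mem_univ i)
      have h2 := Real.rpow_le_rpow (by positivity) this (inv_nonneg.mpr hp.le)
      rwa [← Real.rpow_mul (abs_nonneg _), mul_inv_cancel₀ hp.ne', Real.rpow_one] at h2
    have h2 := Real.rpow_le_rpow (norm_nonneg _) h1 hp.le
    rwa [← Real.rpow_mul hS0, inv_mul_cancel₀ hp.ne', Real.rpow_one] at h2
  calc ∏ i, ‖K (θ i)‖ ≤ ∏ i, (C * Real.exp (-N * |θ i| ^ p)) :=
        Finset.prod_le_prod (fun _ _ => norm_nonneg _) (fun i _ => hK _)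
    _ = C ^ d * Real.exp (-N * ∑ i, |θ i| ^ p) := by
        rw [Finset.prod_mul_distrib, Finset.prod_const, ← Real.exp_sum, ← Finset.mul_sum]
        simp
    _ ≤ _ := by
        gcongr ?_ * Real.exp ?_
        nlinarith

lemma final_step (p q : ℝ) (hq : 1 ≤ q) (Γ₀ : Set (EuclideanSpace ℝ (Fin d))) (h₀o : IsOpen Γ₀)
    (l : (Fin d → ℤ) → EuclideanSpace ℝ (Fin d)) (M C : ℝ) (b : (Fin d → ℤ) → ℝ≥0∞)
    (hp : 0 < p)
    (hM : ∀ ξ, ∑' k, ENNReal.ofReal (Real.exp (-‖ξ - l k‖ ^ p)) ≤ ENNReal.ofReal M)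
    (hb : ∑' k, b k ^ q < ∞) (g : EuclideanSpace ℝ (Fin d) → ℝ) (hg0 : ∀ ξ, 0 ≤ g ξ)
    (hg : ∀ ξ ∈ Γ₀, ENNReal.ofReal (g ξ) ≤ ENNReal.ofReal C *
      ∑' k, ENNReal.ofReal (Real.exp (-‖ξ - l k‖ ^ p)) * b k) :
    (∫⁻ ξ in Γ₀, ENNReal.ofReal (g ξ ^ q)) < ∞ := by
  have hq0 : 0 ≤ q := by linarith
  have hq1 : 0 ≤ q - 1 := by linarith
  set D : ℝ≥0∞ := ENNReal.ofReal C ^ q * ENNReal.ofReal M ^ (q - 1) with hD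
  have hDtop : D < ∞ := ENNReal.mul_lt_top (ENNReal.rpow_lt_top_of_nonneg hq0 ENNReal.ofReal_ne_top)
    (ENNReal.rpow_lt_top_of_nonneg hq1 ENNReal.ofReal_ne_top)
  have hmeas : ∀ k, Measurable fun ξ : EuclideanSpace ℝ (Fin d) =>
      ENNReal.ofReal (Real.exp (-‖ξ - l k‖ ^ p)) := fun k => by fun_prop
  calc _ ≤ ∫⁻ ξ in Γ₀, D * ∑' k, ENNReal.ofReal (Real.exp (-‖ξ - l k‖ ^ p)) * b k ^ q := by
        refine setLIntegral_mono' h₀o.measurableSet fun ξ hξ => ?_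
        rw [← ENNReal.ofReal_rpow_of_nonneg (hg0 ξ) hq0]
        refine (ENNReal.rpow_le_rpow (hg ξ hξ) hq0).trans ?_
        rw [ENNReal.mul_rpow_of_nonneg _ _ hq0, hD, mul_assoc]
        gcongr
        refine (weight_tsum q hq _ _).trans ?_
        gcongr
        exact hM ξ
    _ ≤ ∫⁻ ξ, D * ∑' k, ENNReal.ofReal (Real.exp (-‖ξ - l k‖ ^ p)) * b k ^ q :=
        setLIntegral_le_lintegral _ _
    _ = D * ∑' k, (∫⁻ ξ : EuclideanSpace ℝ (Fin d), ENNReal.ofReal (Real.exp (-‖ξ‖ ^ p))) * b k ^ q := by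
        rw [lintegral_const_mul' _ _ hDtop.ne, lintegral_tsum
          (fun k => ((hmeas k).mul_const _).aemeasurable)]
        congr 2
        ext k
        rw [lintegral_mul_const _ (hmeas k), lintegral_sub_right_eq_self
          (fun ξ : EuclideanSpace ℝ (Fin d) => ENNReal.ofReal (Real.exp (-‖ξ‖ ^ p)))]
    _ < ∞ := by
        rw [ENNReal.tsum_mul_left]
        exact ENNReal.mul_lt_top hDtop (ENNReal.mul_lt_top (H_int p hp) hb)

theorem stmt13 {d : ℕ} (s q : ℝ) (hs : 1 < s) (hq : 1 ≤ q)
    (ω : EuclideanSpace ℝ (Fin d) → ℝ) (hω : IsSAdmissible s ω)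
    (A : Matrix (Fin d) (Fin d) ℝ) (hA : IsUnit A.det)
    (c : ℝ) (hc0 : 0 < c) (hc : c < 2 * Real.pi) (x₁ : EuclideanSpace ℝ (Fin d))
    (f : EuclideanSpace ℝ (Fin d) → ℂ) (hf : Integrable f) (hfc : HasCompactSupport f)
    (hsupp : tsupport f ⊆ interior (lattPara A x₁))
    (Γ₀ Γ : Set (EuclideanSpace ℝ (Fin d)))
    (h₀o : IsOpen Γ₀) (h₀c : IsCone Γ₀) (hΓo : IsOpen Γ) (hΓc : IsCone Γ)
    (hsub : closure Γ₀ \ {0} ⊆ Γ)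
    (h : Summable fun k : Fin d → ℤ =>
      Γ.indicator (fun ξ => (‖FT f ξ‖ * ω ξ) ^ q) (dualLatPt A c k)) :
    (∫⁻ ξ in Γ₀, ENNReal.ofReal ((‖FT f ξ‖ * ω ξ) ^ q)) < ∞ := by
  obtain ⟨-, hωpos, v, -, hvpos, -, -, C₀, k₀, C₁, hC₀, hk₀, hC₁, hv, hmod⟩ := hω
  set p : ℝ := 1 / s with hp_def
  have hp : 0 < p := by positivity
  have hq0 : 0 < q := by linarith
  have hω' : ∀ ξ l, ω ξ ≤ C₁ * C₀ * Real.exp (k₀ * ‖ξ - l‖ ^ p) * ω l := by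
    intro ξ l
    have h1 := hmod (ξ - l) l
    rw [sub_add_cancel] at h1
    refine h1.trans ?_
    rw [mul_assoc C₁ C₀]
    gcongr
    · exact (hωpos l).le
    · exact hv _
  obtain ⟨Rc, hRc, hcone⟩ := cone_sep Γ₀ Γ h₀c hΓo hΓc hsub
  obtain ⟨R, hR, hτ⟩ := tau_norm A hA c hc0
  set L : ℝ := 1 + k₀ + (k₀ + 1) * Rc ^ p with hL_def
  have hL : 0 < L := by positivity
  have hb0 : 0 < c / (2 * Real.pi) := by positivity
  have hb1 : c / (2 * Real.pi) < 1 := by rwa [div_lt_one (by positivity)]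
  obtain ⟨K, C, hC, hK1, hK2, hK3⟩ := kernel_one (c / (2 * Real.pi)) hb0 hb1 s hs (L * R ^ p)
    (by positivity)
  have hfD : ∀ x, x ∉ lattPara A x₁ → f x = 0 := fun x hx =>
    image_eq_zero_of_notMem_tsupport fun h' => hx (interior_subset (hsupp h'))
  obtain ⟨M, hM⟩ := H_sum A hA c hc0 p hp
  set B : ℝ := ((2 * Real.pi) ^ (-(d : ℝ) / 2) : ℝ) * ∫ x, ‖f x‖ with hB_def
  have hB : 0 ≤ B := mul_nonneg (by positivity) (integral_nonneg fun _ => norm_nonneg _)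
  have hFB : ∀ ξ, ‖FT f ξ‖ ≤ B := FT_norm_le f
  have hKd : ∀ ξ, ∀ k : Fin d → ℤ, ∏ i, ‖K (tauOf A c ξ i - k i)‖ ≤
      C ^ d * Real.exp (-L * ‖ξ - dualLatPt A c k‖ ^ p) := by
    intro ξ k
    refine (K_decay K C (L * R ^ p) p hp hC (by positivity) hK2
      (tauOf A c ξ - fun i => (k i : ℝ))).trans ?_
    gcongr ?_ * Real.exp ?_
    have h1 := Real.rpow_le_rpow (norm_nonneg _) (hτ ξ k).1 hp.le
    rw [Real.mul_rpow hR.le (norm_nonneg _)] at h1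
    nlinarith
  classical
  set b : (Fin d → ℤ) → ℝ := fun k => if dualLatPt A c k ∈ Γ then
    ‖FT f (dualLatPt A c k)‖ * ω (dualLatPt A c k) else Real.exp (-‖dualLatPt A c k‖ ^ p) with hb_def
  have hbn : ∀ k, 0 ≤ b k := by
    intro k
    simp only [hb_def]
    split_ifs
    · exact mul_nonneg (norm_nonneg _) (hωpos _).le
    · positivity
  have hbq : ∑' k, ENNReal.ofReal (b k) ^ q < ∞ := by
    have hle : ∀ k, ENNReal.ofReal (b k) ^ q ≤
        ENNReal.ofReal (Γ.indicator (fun ξ => (‖FT f ξ‖ * ω ξ) ^ q) (dualLatPt A c k)) +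
        ENNReal.ofReal (Real.exp (-‖0 - dualLatPt A c k‖ ^ p)) := by
      intro k
      rw [ENNReal.ofReal_rpow_of_nonneg (hbn k) hq0.le]
      by_cases hk : dualLatPt A c k ∈ Γ
      · simp only [hb_def, if_pos hk, indicator_of_mem hk]
        exact le_self_add
      · simp only [hb_def, if_neg hk]
        refine le_trans (ENNReal.ofReal_le_ofReal ?_) le_add_self
        rw [zero_sub, norm_neg]
        refine (Real.rpow_le_rpow_of_exponent_ge (Real.exp_pos _) ?_ hq).trans (Real.rpow_one _).le
        rw [Real.exp_le_one_iff, neg_nonpos]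
        positivity
    refine lt_of_le_of_lt (ENNReal.tsum_le_tsum hle) ?_
    rw [ENNReal.tsum_add]
    refine ENNReal.add_lt_top.mpr ⟨?_, (hM 0).trans_lt ENNReal.ofReal_lt_top⟩
    rw [← ENNReal.ofReal_tsum_of_nonneg (fun k => ?_) h]
    · exact ENNReal.ofReal_lt_top
    · exact indicator_nonneg (fun ξ _ => Real.rpow_nonneg
        (mul_nonneg (norm_nonneg _) (hωpos _).le) _) _
  set C' : ℝ := C₁ * C₀ * C ^ d * (1 + C₁ * C₀ * B * ω 0) with hC'_def
  have hω0 := hωpos 0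
  have hC' : 0 ≤ C' := by positivity
  refine final_step p q hq Γ₀ h₀o (dualLatPt A c) M C' (fun k => ENNReal.ofReal (b k)) hp hM hbq
    (fun ξ => ‖FT f ξ‖ * ω ξ) (fun ξ => mul_nonneg (norm_nonneg _) (hωpos _).le) ?_
  intro ξ hξ
  rw [ENNReal.ofReal_mul (norm_nonneg _)]
  refine (mul_le_mul_left (FT_bound A hA c hc0 x₁ K C hK1 hK3 f hf hfD ξ) _).trans ?_
  rw [← ENNReal.tsum_mul_right, ← ENNReal.tsum_mul_left]
  refine ENNReal.tsum_le_tsum fun k => ?_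
  rw [← ENNReal.ofReal_mul (by positivity), ← ENNReal.ofReal_mul (by positivity),
    ← ENNReal.ofReal_mul hC']
  refine ENNReal.ofReal_le_ofReal ?_
  have hKk := hKd ξ k
  have hωk := hω' ξ (dualLatPt A c k)
  have hωl := hω' (dualLatPt A c k) 0
  have hFk := hFB (dualLatPt A c k)
  have hlpos := hωpos (dualLatPt A c k)
  have hcn := hcone ξ hξ (dualLatPt A c k)
  set l := dualLatPt A c k with hl
  set u := ‖ξ - l‖ ^ p with hu
  have hu0 : 0 ≤ u := by positivity
  have h1 : (∏ i, ‖K (tauOf A c ξ i - k i)‖) * ‖FT f l‖ * ω ξ ≤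
      C₁ * C₀ * C ^ d * (Real.exp (-L * u + k₀ * u) * (‖FT f l‖ * ω l)) := by
    calc (∏ i, ‖K (tauOf A c ξ i - k i)‖) * ‖FT f l‖ * ω ξ ≤
        (C ^ d * Real.exp (-L * u)) * ‖FT f l‖ * (C₁ * C₀ * Real.exp (k₀ * u) * ω l) := by
          gcongr
          exact (hωpos ξ).le
      _ = _ := by
          rw [Real.exp_add]
          ring
  refine h1.trans ?_
  have hRp : 0 < Rc ^ p := by positivity
  rw [hC'_def, mul_assoc (C₁ * C₀ * C ^ d)]
  refine mul_le_mul_of_nonneg_left ?_ (by positivity)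
  by_cases hk : l ∈ Γ
  · have hbk : b k = ‖FT f l‖ * ω l := by simp only [hb_def, ← hl, if_pos hk]
    rw [hbk]
    have hF0 : 0 ≤ ‖FT f l‖ * ω l := by positivity
    have he : Real.exp (-L * u + k₀ * u) ≤ Real.exp (-u) := by
      rw [Real.exp_le_exp, hL_def]
      have : 0 ≤ (k₀ + 1) * Rc ^ p * u := by positivity
      nlinarith
    calc _ ≤ Real.exp (-u) * (‖FT f l‖ * ω l) := by gcongr
      _ ≤ _ := by
        refine le_mul_of_one_le_left (by positivity) ?_
        have : 0 ≤ C₁ * C₀ * B * ω 0 := by positivity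
        linarith
  · have hbk : b k = Real.exp (-‖l‖ ^ p) := by simp only [hb_def, ← hl, if_neg hk]
    rw [hbk]
    rw [sub_zero] at hωl
    set w := ‖l‖ ^ p with hw
    have hwu : w ≤ Rc ^ p * u := by
      have := Real.rpow_le_rpow (norm_nonneg _) (hcn hk) hp.le
      rwa [Real.mul_rpow hRc.le (norm_nonneg _)] at this
    calc Real.exp (-L * u + k₀ * u) * (‖FT f l‖ * ω l) ≤
        Real.exp (-L * u + k₀ * u) * (B * (C₁ * C₀ * Real.exp (k₀ * w) * ω 0)) := by gcongr
      _ = (C₁ * C₀ * B * ω 0) * Real.exp (-L * u + k₀ * u + k₀ * w) := by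
          rw [Real.exp_add _ (k₀ * w)]
          ring
      _ ≤ (1 + C₁ * C₀ * B * ω 0) * Real.exp (-u + -w) := by
          refine mul_le_mul (by linarith) (Real.exp_le_exp.mpr ?_) (Real.exp_pos _).le (by positivity)
          · rw [hL_def]
            have := mul_le_mul_of_nonneg_left hwu (by linarith : 0 ≤ k₀ + 1)
            nlinarith
      _ = _ := by rw [Real.exp_add]

end Paper
end
end

section
/- Let L > 0, let f ∈ L¹(ℝ^d) have compact support, and let φ be a smooth function with compact support contained in the open cube (0,L)^d and with φ = 1 on the support of f. Then for every ξ ∈ ℝ^d the series Σ_{k ∈ ℤ^d} φ̂(ξ − 2πk/L)·f̂(2πk/L) converges absolutely and f̂(ξ) = (2π)^{d/2}·L^{−d}·Σ_{k ∈ ℤ^d} φ̂(ξ − 2πk/L)·f̂(2πk/L). -/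
open MeasureTheory Complex Set
open scoped ENNReal RealInnerProductSpace NNReal

noncomputable section

namespace Paper

variable {d : ℕ}

lemma FT_eq_fourier (f : EuclideanSpace ℝ (Fin d) → ℂ) (η : EuclideanSpace ℝ (Fin d)) :
    FT f η = ((2 * Real.pi) ^ (-(d : ℝ) / 2) : ℝ) *
      FourierTransform.fourier f ((2 * Real.pi)⁻¹ • η) := by
  rw [FT, Real.fourier_eq']
  congr 1
  refine integral_congr_ae (Filter.Eventually.of_forall fun x => ?_)
  simp only [smul_eq_mul, inner_smul_right]
  rw [mul_comm]
  congr 2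
  have : (Real.pi : ℂ) ≠ 0 := by exact_mod_cast Real.pi_ne_zero
  push_cast
  field_simp

lemma summable_lattice_aux {ι E : Type*} [Fintype ι] [NormedAddCommGroup E] [NormedSpace ℝ E]
    [FiniteDimensional ℝ E] (b : Module.Basis ι ℝ E) : ∃ n : ℕ, ∀ x : E,
    Summable fun k : ι → ℤ => ‖∑ i, (k i : ℝ) • b i - x‖⁻¹ ^ n := by
  have hm : ∀ k : ι → ℤ, ∑ i, (k i : ℝ) • b i ∈ Submodule.span ℤ (Set.range b) := by
    intro k
    refine Submodule.sum_mem _ fun i _ => ?_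
    rw [Int.cast_smul_eq_zsmul]
    exact Submodule.smul_mem _ _ (Submodule.subset_span ⟨i, rfl⟩)
  have hex : ∃ n : ℕ, Module.finrank ℤ (Submodule.span ℤ (Set.range b)) < n :=
    ⟨_, Nat.lt_succ_self _⟩
  obtain ⟨n, hn⟩ := hex
  refine ⟨n, fun x => ?_⟩
  have h := ZLattice.summable_norm_sub_inv_pow (Submodule.span ℤ (Set.range b)) n hn x
  have hinj : Function.Injective (fun k : ι → ℤ =>
      (⟨∑ i, (k i : ℝ) • b i, hm k⟩ : Submodule.span ℤ (Set.range b))) := by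
    intro k l hkl
    have h1 : ∑ i, (k i : ℝ) • b i = ∑ i, (l i : ℝ) • b i := congrArg Subtype.val hkl
    ext i
    have h2 := congrArg (fun v => b.repr v i) h1
    simp only [b.repr_sum_self] at h2
    exact Int.cast_injective (α := ℝ) h2
  have h3 := h.comp_injective hinj
  refine h3.congr fun k => ?_
  simp only [Function.comp_apply]

lemma summable_lattice (d : ℕ) : ∃ n : ℕ, ∀ x : Fin d → ℝ,
    Summable fun k : Fin d → ℤ => ‖(fun i => (k i : ℝ)) - x‖⁻¹ ^ n := by
  obtain ⟨n, hn⟩ := summable_lattice_aux (Pi.basisFun ℝ (Fin d))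
  refine ⟨n, fun x => (hn x).congr fun k => ?_⟩
  have : ∑ i, (k i : ℝ) • (Pi.basisFun ℝ (Fin d)) i = fun i => (k i : ℝ) := by
    ext j
    simp [Finset.sum_apply, Pi.single_apply]
  rw [this]

lemma toE_apply (x : Fin d → ℝ) (i : Fin d) : toE x i = x i := rfl

lemma summable_FT (L : ℝ) (hL : 0 < L) (φ : EuclideanSpace ℝ (Fin d) → ℂ)
    (hφsm : ContDiff ℝ (⊤ : ℕ∞) φ) (hφc : HasCompactSupport φ)
    (ξ : EuclideanSpace ℝ (Fin d)) :
    Summable fun k : Fin d → ℤ => FT φ (ξ - toE fun i => 2 * Real.pi * (k i : ℝ) / L) := by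
  obtain ⟨n, hn⟩ := summable_lattice d
  let S := hφc.toSchwartzMap hφsm
  obtain ⟨C, hC0, hC⟩ := (FourierTransform.fourier S).decay n 0
  have hC' : ∀ y, ‖y‖ ^ n * ‖FourierTransform.fourier φ y‖ ≤ C := by
    intro y
    have := hC y
    rw [norm_iteratedFDeriv_zero] at this
    exact this
  set x : Fin d → ℝ := fun i => L * (2 * Real.pi)⁻¹ * ξ i with hx
  refine Summable.of_norm_bounded_eventually
    (((hn x).mul_left (L ^ n * C)).mul_left ((2 * Real.pi) ^ (-(d : ℝ) / 2) : ℝ)) ?_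
  have hfin : {k : Fin d → ℤ | (fun i => (k i : ℝ)) = x}.Finite := by
    refine Set.Subsingleton.finite ?_
    intro k hk l hl
    ext i
    have := congrFun (Eq.trans hk (Eq.symm hl)) i
    exact_mod_cast this
  filter_upwards [hfin.compl_mem_cofinite] with k hk
  have hk : (fun i => (k i : ℝ)) ≠ x := hk
  have hpos : 0 < ‖(fun i => (k i : ℝ)) - x‖ := norm_pos_iff.2 (sub_ne_zero.2 hk)
  rw [FT_eq_fourier, norm_mul]
  have h2 : ‖(((2 * Real.pi) ^ (-(d : ℝ) / 2) : ℝ) : ℂ)‖ = (2 * Real.pi) ^ (-(d : ℝ) / 2) := by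
    rw [Complex.norm_real, Real.norm_of_nonneg (by positivity)]
  rw [h2]
  refine mul_le_mul_of_nonneg_left ?_ (by positivity)
  set y : EuclideanSpace ℝ (Fin d) :=
    (2 * Real.pi)⁻¹ • (ξ - toE fun i => 2 * Real.pi * (k i : ℝ) / L) with hy
  have hle : ‖(fun i => (k i : ℝ)) - x‖ ≤ L * ‖y‖ := by
    rw [pi_norm_le_iff_of_nonneg (by positivity)]
    intro i
    have h3 : ((fun i => (k i : ℝ)) - x) i = -(L * y i) := by
      simp only [hy, hx, Pi.sub_apply, PiLp.smul_apply, PiLp.sub_apply, toE_apply, smul_eq_mul]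
      have := Real.pi_ne_zero
      field_simp
      ring
    rw [h3, norm_neg, norm_mul, Real.norm_of_nonneg hL.le]
    exact mul_le_mul_of_nonneg_left (PiLp.norm_apply_le y i) hL.le
  rw [inv_pow, ← div_eq_mul_inv, le_div_iff₀ (by positivity)]
  calc ‖FourierTransform.fourier φ y‖ * ‖(fun i => (k i : ℝ)) - x‖ ^ n
      ≤ ‖FourierTransform.fourier φ y‖ * (L * ‖y‖) ^ n := by gcongr
    _ = L ^ n * (‖y‖ ^ n * ‖FourierTransform.fourier φ y‖) := by ring
    _ ≤ L ^ n * C := by gcongr; exact hC' y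

lemma mFourier_coe (k : Fin d → ℤ) (t : Fin d → ℝ) :
    UnitAddTorus.mFourier k (fun i => (t i : UnitAddCircle)) =
      Complex.exp ((2 * Real.pi * ∑ i, (k i : ℝ) * t i : ℝ) * Complex.I) := by
  simp only [UnitAddTorus.mFourier, ContinuousMap.coe_mk, fourier_coe_apply]
  rw [← Complex.exp_sum]
  congr 1
  push_cast
  rw [Finset.mul_sum, Finset.sum_mul]
  refine Finset.sum_congr rfl fun i _ => ?_
  simp
  ring

lemma fourier_series (g : (Fin d → ℝ) → ℂ) (hg : Continuous g) (hgc : HasCompactSupport g)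
    (hs : tsupport g ⊆ {t | ∀ i, t i ∈ Set.Ioo (0 : ℝ) 1})
    (hsum : Summable fun k : Fin d → ℤ =>
      ∫ t, Complex.exp ((-(2 * Real.pi * ∑ i, (k i : ℝ) * t i) : ℝ) * Complex.I) * g t)
    (t : Fin d → ℝ) (ht : ∀ i, t i ∈ Set.Ioo (0 : ℝ) 1) :
    HasSum (fun k : Fin d → ℤ =>
      (∫ t, Complex.exp ((-(2 * Real.pi * ∑ i, (k i : ℝ) * t i) : ℝ) * Complex.I) * g t) *
        Complex.exp ((2 * Real.pi * ∑ i, (k i : ℝ) * t i : ℝ) * Complex.I)) (g t) := by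
  let rep : UnitAddTorus (Fin d) → (Fin d → ℝ) :=
    fun s i => (AddCircle.equivIoc (1 : ℝ) 0 (s i) : ℝ)
  let q : (Fin d → ℝ) → UnitAddTorus (Fin d) := fun t i => (t i : UnitAddCircle)
  have hq : Continuous q := by
    refine continuous_pi fun i => ?_
    exact (AddCircle.continuous_mk' (1 : ℝ)).comp (continuous_apply i)
  have hqrep : ∀ s, q (rep s) = s := fun s => funext fun i =>
    (AddCircle.equivIoc (1 : ℝ) 0).symm_apply_apply (s i)
  have hrepq : ∀ t : Fin d → ℝ, (∀ i, t i ∈ Set.Ioc (0 : ℝ) 1) → rep (q t) = t := by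
    intro t ht
    ext i
    have h1 : t i ∈ Set.Ioc (0 : ℝ) (0 + 1) := by simpa using ht i
    have := (AddCircle.equivIoc (1 : ℝ) 0).apply_symm_apply ⟨t i, h1⟩
    exact congrArg Subtype.val this
  have hcont : Continuous (fun s => g (rep s)) := by
    rw [continuous_iff_continuousAt]
    intro s
    by_cases h0 : ∀ i, s i ≠ ((0 : ℝ) : UnitAddCircle)
    · refine hg.continuousAt.comp (f := rep) ?_
      refine continuousAt_pi.2 fun i => ?_
      have h1 := AddCircle.continuousAt_equivIoc (1 : ℝ) 0 (h0 i)
      have h2 : ContinuousAt (fun c : UnitAddCircle =>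
          ((AddCircle.equivIoc (1 : ℝ) 0 c : Set.Ioc (0 : ℝ) (0 + 1)) : ℝ)) (s i) :=
        continuousAt_subtype_val.comp h1
      exact ContinuousAt.comp (f := fun r : UnitAddTorus (Fin d) => r i) h2
        (continuous_apply i).continuousAt
    · push Not at h0
      obtain ⟨i, hi⟩ := h0
      have hK : IsClosed (q '' tsupport g) := (hgc.isCompact.image hq).isClosed
      have hs' : s ∉ q '' tsupport g := by
        rintro ⟨u, hu, hus⟩
        have h1 := hs hu i
        have h2 : rep (q u) i = u i := by
          rw [hrepq u fun j => ⟨(hs hu j).1, (hs hu j).2.le⟩]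
        have h3 : (q u) i = ((1 : ℝ) : UnitAddCircle) := by
          rw [hus, hi]
          exact (AddCircle.coe_period (1 : ℝ)).symm
        have h4 : rep (q u) i = rep (q 1) i := by
          simp only [rep, h3]
          rfl
        rw [hrepq 1 (by simp)] at h4
        rw [h2] at h4
        exact h1.2.ne h4
      have hev : (fun s => g (rep s)) =ᶠ[nhds s] fun _ => 0 := by
        filter_upwards [hK.isOpen_compl.mem_nhds hs'] with r hr
        by_contra hne
        exact hr ⟨rep r, subset_tsupport g hne, hqrep r⟩
      exact continuousAt_const.congr hev.symm
  let G : C(UnitAddTorus (Fin d), ℂ) := ⟨fun s => g (rep s), hcont⟩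
  have hcoef : ∀ k : Fin d → ℤ, UnitAddTorus.mFourierCoeff G k =
      ∫ t, Complex.exp ((-(2 * Real.pi * ∑ i, (k i : ℝ) * t i) : ℝ) * Complex.I) * g t := by
    intro k
    rw [UnitAddTorus.mFourierCoeff_eq_integral _ _ 0]
    have hms : MeasurableSet {x : Fin d → ℝ | ∀ i, x i ∈ Set.Ioc ((0 : Fin d → ℝ) i)
        ((0 : Fin d → ℝ) i + 1)} :=
      MeasurableSet.univ_pi' (fun i => measurableSet_Ioc)
    rw [← setIntegral_eq_integral_of_forall_compl_eq_zero
      (s := {x : Fin d → ℝ | ∀ i, x i ∈ Set.Ioc ((0 : Fin d → ℝ) i)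
        ((0 : Fin d → ℝ) i + 1)}) (f := fun t => Complex.exp
        ((-(2 * Real.pi * ∑ i, (k i : ℝ) * t i) : ℝ) * Complex.I) * g t)]
    · refine setIntegral_congr_fun hms fun u hu => ?_
      have hu' : ∀ i, u i ∈ Set.Ioc (0 : ℝ) 1 := by simpa using hu
      have h1 : G (fun i => (u i : UnitAddCircle)) = g u := congrArg g (hrepq u hu')
      simp only [h1, smul_eq_mul]
      rw [mFourier_coe]
      congr 3
      simp
    · intro u hu
      have : g u = 0 := by
        by_contra hne
        apply hu
        intro i
        have := hs (subset_tsupport g hne) i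
        simpa using ⟨this.1, this.2.le⟩
      rw [this, mul_zero]
  have hS : Summable (UnitAddTorus.mFourierCoeff G) := by
    refine hsum.congr fun k => ?_
    exact (hcoef k).symm
  have := UnitAddTorus.hasSum_mFourier_series_apply_of_summable hS (q t)
  have hGt : G (q t) = g t := congrArg g (hrepq t fun i => ⟨(ht i).1, (ht i).2.le⟩)
  rw [hGt] at this
  convert this using 2 with k
  rw [hcoef, smul_eq_mul, mFourier_coe]

lemma inner_toE (x : EuclideanSpace ℝ (Fin d)) (y : Fin d → ℝ) :
    (⟪x, toE y⟫ : ℝ) = ∑ i, y i * x i := by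
  rw [PiLp.inner_apply]
  rfl

lemma integral_toE (L : ℝ) (hL : 0 < L) (h : EuclideanSpace ℝ (Fin d) → ℂ) :
    ∫ t : Fin d → ℝ, h (toE (L • t)) = ((L ^ d : ℝ) : ℂ)⁻¹ * ∫ x, h x := by
  have h1 := (PiLp.volume_preserving_toLp (Fin d)).integral_comp
    (MeasurableEquiv.toLp 2 (Fin d → ℝ)).measurableEmbedding h
  have h2 := Measure.integral_comp_smul (volume : Measure (Fin d → ℝ))
    (fun t => h (toE t)) L
  rw [h2]
  have h3 : ∫ t : Fin d → ℝ, h (toE t) = ∫ x, h x := h1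
  rw [h3]
  simp [abs_of_pos hL]

lemma series_cube (L : ℝ) (hL : 0 < L) (φ : EuclideanSpace ℝ (Fin d) → ℂ)
    (hφsm : ContDiff ℝ (⊤ : ℕ∞) φ) (hφc : HasCompactSupport φ)
    (hφsupp : tsupport φ ⊆ {x : EuclideanSpace ℝ (Fin d) | ∀ i, x i ∈ Set.Ioo 0 L})
    (ξ : EuclideanSpace ℝ (Fin d)) (x : EuclideanSpace ℝ (Fin d))
    (hx : ∀ i, x i ∈ Set.Ioo 0 L) :
    HasSum (fun k : Fin d → ℤ => (((2 * Real.pi) ^ ((d : ℝ) / 2) / L ^ d : ℝ) : ℂ) *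
      FT φ (ξ - toE fun i => 2 * Real.pi * (k i : ℝ) / L) *
      Complex.exp (-(⟪x, toE fun i => 2 * Real.pi * (k i : ℝ) / L⟫ : ℝ) * Complex.I))
      (φ x * Complex.exp (-(⟪x, ξ⟫ : ℝ) * Complex.I)) := by
  let ψ : EuclideanSpace ℝ (Fin d) → ℂ :=
    fun x => φ x * Complex.exp (-(⟪x, ξ⟫ : ℝ) * Complex.I)
  let e : (Fin d → ℝ) ≃ₜ EuclideanSpace ℝ (Fin d) :=
    (Homeomorph.smulOfNeZero L hL.ne').trans
      (EuclideanSpace.equiv (Fin d) ℝ).symm.toHomeomorph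
  have he : ∀ t, e t = toE (L • t) := fun t => rfl
  let g : (Fin d → ℝ) → ℂ := ψ ∘ e
  have hφcont : Continuous φ := hφsm.continuous
  have hψ : Continuous ψ := by
    simp only [ψ]
    fun_prop
  have hψc : HasCompactSupport ψ := hφc.mul_right
  have hψs : tsupport ψ ⊆ tsupport φ := tsupport_mul_subset_left
  have hg : Continuous g := hψ.comp e.continuous
  have hgc : HasCompactSupport g := hψc.comp_homeomorph e
  have hs : tsupport g ⊆ {t | ∀ i, t i ∈ Set.Ioo (0 : ℝ) 1} := by
    intro t ht i
    have h1 : e t ∈ tsupport ψ := tsupport_comp_subset_preimage ψ e.continuous ht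
    have h2 := hφsupp (hψs h1) i
    have h3 : e t i = L * t i := rfl
    rw [h3] at h2
    exact ⟨pos_of_mul_pos_right h2.1 hL.le, by nlinarith [h2.2]⟩
  have hcoef : ∀ k : Fin d → ℤ,
      (∫ t, Complex.exp ((-(2 * Real.pi * ∑ i, (k i : ℝ) * t i) : ℝ) * Complex.I) * g t) =
      (((2 * Real.pi) ^ ((d : ℝ) / 2) / L ^ d : ℝ) : ℂ) *
        FT φ (ξ - toE fun i => 2 * Real.pi * ((-k) i : ℝ) / L) := by
    intro k
    have h1 := integral_toE L hL (fun x => φ x * Complex.exp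
      (-(⟪x, ξ - toE fun i => 2 * Real.pi * ((-k) i : ℝ) / L⟫ : ℝ) * Complex.I))
    have h2 : (((2 * Real.pi) ^ ((d : ℝ) / 2) / L ^ d : ℝ) : ℂ) *
        (((2 * Real.pi) ^ (-(d : ℝ) / 2) : ℝ) : ℂ) = ((L ^ d : ℝ) : ℂ)⁻¹ := by
      rw [← Complex.ofReal_mul, ← Complex.ofReal_inv, div_mul_eq_mul_div,
        ← Real.rpow_add (by positivity)]
      congr 1
      have : (d : ℝ) / 2 + -(d : ℝ) / 2 = 0 := by ring
      rw [this, Real.rpow_zero, one_div]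
    rw [FT, ← mul_assoc, h2, ← h1]
    refine integral_congr_ae (Filter.Eventually.of_forall fun t => ?_)
    simp only [g, ψ, Function.comp_apply, he]
    rw [mul_comm, mul_assoc, ← Complex.exp_add]
    congr 2
    rw [inner_sub_right, inner_toE]
    have h3 : ∑ i, 2 * Real.pi * ((-k) i : ℝ) / L * toE (L • t) i =
        -(2 * Real.pi * ∑ i, (k i : ℝ) * t i) := by
      rw [Finset.mul_sum, ← Finset.sum_neg_distrib]
      refine Finset.sum_congr rfl fun i _ => ?_
      simp only [toE_apply, Pi.smul_apply, smul_eq_mul, Pi.neg_apply, Int.cast_neg]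
      field_simp
    rw [h3]
    push_cast
    ring
  have hsumF := (summable_FT L hL φ hφsm hφc ξ).mul_left
    (((2 * Real.pi) ^ ((d : ℝ) / 2) / L ^ d : ℝ) : ℂ)
  have hsum : Summable fun k : Fin d → ℤ =>
      ∫ t, Complex.exp ((-(2 * Real.pi * ∑ i, (k i : ℝ) * t i) : ℝ) * Complex.I) * g t := by
    simp_rw [hcoef]
    have := (Equiv.neg (Fin d → ℤ)).summable_iff.2 hsumF
    refine this.congr fun k => ?_
    simp
  have key := fourier_series g hg hgc hs hsum (L⁻¹ • (fun i => x i)) (by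
    intro i
    simp only [Pi.smul_apply, smul_eq_mul]
    refine ⟨mul_pos (inv_pos.2 hL) (hx i).1, ?_⟩
    rw [inv_mul_lt_iff₀ hL]
    simpa using (hx i).2)
  have hgx : g (L⁻¹ • (fun i => x i)) = φ x * Complex.exp (-(⟪x, ξ⟫ : ℝ) * Complex.I) := by
    have : e (L⁻¹ • (fun i => x i)) = x := by
      ext i
      change L * (L⁻¹ * x i) = x i
      field_simp
    simp only [g, Function.comp_apply, this, ψ]
  rw [hgx] at key
  rw [← (Equiv.neg (Fin d → ℤ)).hasSum_iff] at key
  convert key using 2 with k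
  simp only [Function.comp_apply]
  rw [hcoef]
  simp only [Equiv.neg_apply, neg_neg]
  congr 2
  rw [inner_toE, ← Complex.ofReal_neg, Finset.mul_sum, ← Finset.sum_neg_distrib]
  congr 2
  refine Finset.sum_congr rfl fun i _ => ?_
  simp only [Pi.smul_apply, smul_eq_mul, Pi.neg_apply, Int.cast_neg]
  field_simp

theorem stmt14 {d : ℕ} (L : ℝ) (hL : 0 < L)
    (f φ : EuclideanSpace ℝ (Fin d) → ℂ)
    (hf : Integrable f) (hfc : HasCompactSupport f)
    (hφsm : ContDiff ℝ (⊤ : ℕ∞) φ) (hφc : HasCompactSupport φ)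
    (hφsupp : tsupport φ ⊆ {x : EuclideanSpace ℝ (Fin d) | ∀ i, x i ∈ Set.Ioo 0 L})
    (hφ1 : ∀ x ∈ tsupport f, φ x = 1) :
    ∀ ξ : EuclideanSpace ℝ (Fin d),
      (Summable fun k : Fin d → ℤ =>
        ‖FT φ (ξ - toE fun i => 2 * Real.pi * (k i : ℝ) / L) *
          FT f (toE fun i => 2 * Real.pi * (k i : ℝ) / L)‖) ∧
      FT f ξ = (((2 * Real.pi) ^ ((d : ℝ) / 2) / L ^ d : ℝ) : ℂ) *
        ∑' k : Fin d → ℤ,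
          FT φ (ξ - toE fun i => 2 * Real.pi * (k i : ℝ) / L) *
            FT f (toE fun i => 2 * Real.pi * (k i : ℝ) / L) := by
  intro ξ
  set c : (Fin d → ℤ) → EuclideanSpace ℝ (Fin d) :=
    fun k => toE fun i => 2 * Real.pi * (k i : ℝ) / L with hc
  have hsφ : Summable fun k => FT φ (ξ - c k) := summable_FT L hL φ hφsm hφc ξ
  have hbd : ∀ η, ‖FT f η‖ ≤ (2 * Real.pi) ^ (-(d : ℝ) / 2) * ∫ x, ‖f x‖ := by
    intro η
    rw [FT, norm_mul, Complex.norm_real, Real.norm_of_nonneg (by positivity)]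
    refine mul_le_mul_of_nonneg_left ?_ (by positivity)
    refine (norm_integral_le_integral_norm _).trans (le_of_eq ?_)
    refine integral_congr_ae (Filter.Eventually.of_forall fun x => ?_)
    simp only [norm_mul]
    rw [← Complex.ofReal_neg, Complex.norm_exp_ofReal_mul_I, mul_one]
  refine ⟨?_, ?_⟩
  · refine Summable.of_nonneg_of_le (fun k => norm_nonneg _) (fun k => ?_)
      (hsφ.norm.mul_right ((2 * Real.pi) ^ (-(d : ℝ) / 2) * ∫ x, ‖f x‖))
    rw [norm_mul]
    exact mul_le_mul_of_nonneg_left (hbd _) (norm_nonneg _)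
  set A : ℂ := (((2 * Real.pi) ^ ((d : ℝ) / 2) / L ^ d : ℝ) : ℂ) with hA
  let F : (Fin d → ℤ) → EuclideanSpace ℝ (Fin d) → ℂ := fun k x =>
    (A * FT φ (ξ - c k)) * (f x * Complex.exp (-(⟪x, c k⟫ : ℝ) * Complex.I))
  have hnorm : ∀ (η x : EuclideanSpace ℝ (Fin d)),
      ‖Complex.exp (-(⟪x, η⟫ : ℝ) * Complex.I)‖ = 1 := by
    intro η x
    rw [← Complex.ofReal_neg, Complex.norm_exp_ofReal_mul_I]
  have hint : ∀ k, Integrable (F k) := by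
    intro k
    refine Integrable.const_mul ?_ _
    refine hf.mul_bdd (c := 1) ?_ (Filter.Eventually.of_forall fun x => (hnorm (c k) x).le)
    exact Continuous.aestronglyMeasurable (by fun_prop)
  have hsn : Summable fun k => ∫ x, ‖F k x‖ := by
    have h1 : ∀ k, ∫ x, ‖F k x‖ = ‖A * FT φ (ξ - c k)‖ * ∫ x, ‖f x‖ := by
      intro k
      rw [← integral_const_mul]
      refine integral_congr_ae (Filter.Eventually.of_forall fun x => ?_)
      simp only [F, norm_mul]
      rw [hnorm (c k) x, mul_one]
    simp_rw [h1]
    exact ((hsφ.mul_left A).norm).mul_right _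
  have hS := hasSum_integral_of_summable_integral_norm hint hsn
  have hpt : ∀ x, ∑' k, F k x = f x * Complex.exp (-(⟪x, ξ⟫ : ℝ) * Complex.I) := by
    intro x
    by_cases hx : f x = 0
    · simp [F, hx]
    · have hx1 : φ x = 1 := hφ1 x (subset_tsupport f hx)
      have hx2 := hφsupp (subset_tsupport φ (show φ x ≠ 0 by rw [hx1]; exact one_ne_zero))
      have h2 := (series_cube L hL φ hφsm hφc hφsupp ξ x hx2).mul_left (f x)
      rw [hx1, one_mul] at h2
      rw [← h2.tsum_eq]
      refine tsum_congr fun k => ?_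
      simp only [F, hc, hA]
      ring
  simp_rw [hpt] at hS
  have hS2 := hS.mul_left ((((2 * Real.pi) ^ (-(d : ℝ) / 2) : ℝ)) : ℂ)
  have h3 : FT f ξ = (((2 * Real.pi) ^ (-(d : ℝ) / 2) : ℝ) : ℂ) *
    ∫ x, f x * Complex.exp (-(⟪x, ξ⟫ : ℝ) * Complex.I) := rfl
  rw [h3, ← hS2.tsum_eq, ← tsum_mul_left]
  refine tsum_congr fun k => ?_
  simp only [F]
  rw [integral_const_mul]
  simp only [FT]
  ring

end Paper
end
end
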